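/- In the sparse deconvolution model with μ_n = n^{ν−1} for some ν > 1/2, suppose: g is bounded above and g(θ) ≥ C_{g1} (θ²+1)^{−v_s} for all θ, for some v_s ≥ 1 and C_{g1} > 0; with v_1 the least integer ≥ v_s, g* is v_1 times continuously differentiable with |d^l g*(ω)/dω^l| ≤ C_{g2} |g*(ω)| for l = 1, …, v_1 and all ω; there exists ω_0 > 0 such that ρ(ω) = arg(φ*(ω)) is v_1 times continuously differentiable for |ω| ≥ ω_0 with all derivatives up to order v_1 bounded by ρ̄ < ∞; |g*(ω)| ≤ C_{g3} (ω²+1)^{−α/2} for all ω with α ≥ 0; and |φ*(ω)| ≥ C_{φ1} (ω²+1)^{−a/2} for all ω with a < α + 1/2. Then for all s ≥ 0, B > 0 there is a constant C > 0 (independent of n) such that, for all sufficiently large n, R_{n,μ_n}(Ω_s(B)) = inf over measurable estimators T of (Y_1,…,Y_n) of sup over probability densities f₀ ∈ Ω_s(B) (with ∫ |f₀*(ω) φ*(ω)| dω < ∞) of E(T − Φ_μ)² satisfies R_{n,μ_n}(Ω_s(B)) ≥ C · n^{−(2ν−1)(2s+2a−1)/(2s+2α)}. -/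

import Mathlib

open MeasureTheory Finset


/-- Fourier transform `t*(ω) = ∫ e^{iωx} t(x) dx` of a real-valued function. -/
noncomputable def ft (t : ℝ → ℝ) (ω : ℝ) : ℂ :=
  ∫ x : ℝ, Complex.exp (Complex.I * (ω : ℂ) * (x : ℂ)) * (t x : ℂ)

open FourierTransform in
lemma fourier_adj (f g : ℝ → ℂ) (hf : Integrable f) (hg : Integrable g) :
    ∫ x, 𝓕 f x * g x = ∫ x, f x * 𝓕 g x := by
  have := VectorFourier.integral_fourierIntegral_smul_eq_flip (𝕜 := ℝ) (V := ℝ) (W := ℝ) (F := ℂ)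
    (μ := volume) (ν := volume) (L := innerₗ ℝ)
    Real.continuous_fourierChar (by exact continuous_inner) hf hg
  simp only [flip_innerₗ, smul_eq_mul] at this
  exact this

open FourierTransform SchwartzMap in
lemma plancherel_ae (f : ℝ → ℂ) (h1 : Integrable f) (h2 : MemLp f 2) :
    (𝓕 (h2.toLp f) : Lp (α := ℝ) ℂ 2) =ᵐ[volume] 𝓕 f := by
  apply ae_eq_of_integral_contDiff_smul_eq
  · exact (Lp.memLp _).locallyIntegrable (by norm_num)
  · exact (VectorFourier.fourierIntegral_continuous Real.continuous_fourierChar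
      (by exact continuous_inner) h1).locallyIntegrable
  · intro u hu huc
    have huc' : HasCompactSupport (fun x => (u x : ℂ)) := huc.comp_left (g := fun x : ℝ => (x : ℂ)) (by simp)
    have hu' : ContDiff ℝ (⊤ : ℕ∞) (fun x => (u x : ℂ)) := Complex.ofRealCLM.contDiff.comp hu
    let S : 𝓢(ℝ, ℂ) := huc'.toSchwartzMap hu'
    have hS : ∀ x, S x = (u x : ℂ) := fun x => rfl
    have e1 := congrArg (fun D : 𝓢'(ℝ, ℂ) => D S) (Lp.fourier_toTemperedDistribution_eq (h2.toLp f))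
    simp only [TemperedDistribution.fourier_apply, Lp.toTemperedDistribution_apply] at e1
    have e2 : ∫ x, (𝓕 S) x • (h2.toLp f) x = ∫ x, 𝓕 (fun x => (u x : ℂ)) x * f x := by
      apply integral_congr_ae
      filter_upwards [h2.coeFn_toLp] with x hx
      rw [hx, smul_eq_mul, SchwartzMap.fourier_coe]
      rfl
    have hui : Integrable (fun x => (u x : ℂ)) := S.integrable
    rw [e2, fourier_adj _ _ hui h1] at e1
    simp only [hS, smul_eq_mul] at e1
    simp only [Complex.real_smul]
    exact e1.symm

open FourierTransform in
lemma plancherel (f : ℝ → ℂ) (h1 : Integrable f) (h2 : MemLp f 2) :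
    MemLp (𝓕 f) 2 ∧ ∫ x, ‖𝓕 f x‖ ^ 2 = ∫ x, ‖f x‖ ^ 2 := by
  have h := plancherel_ae f h1 h2
  refine ⟨(memLp_congr_ae h).1 (Lp.memLp _), ?_⟩
  have key : ∀ F : Lp (α := ℝ) ℂ 2, ∫ x, ‖F x‖ ^ 2 = ‖F‖ ^ 2 := by
    intro F
    have := L2.inner_def (𝕜 := ℂ) F F
    have h3 : (inner ℂ F F : ℂ) = ((‖F‖ ^ 2 : ℝ) : ℂ) := by
      rw [inner_self_eq_norm_sq_to_K]; norm_cast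
    rw [h3] at this
    have h4 : ∀ x, (inner ℂ (F x) (F x) : ℂ) = ((‖F x‖ ^ 2 : ℝ) : ℂ) := fun x => by
      rw [inner_self_eq_norm_sq_to_K]; norm_cast
    simp_rw [h4] at this
    have h5 := this.trans (integral_complex_ofReal (μ := volume) (f := fun x => ‖F x‖ ^ 2))
    exact_mod_cast h5.symm
  have e1 : ∫ x, ‖𝓕 f x‖ ^ 2 = ∫ x, ‖(𝓕 (h2.toLp f) : Lp (α := ℝ) ℂ 2 volume) x‖ ^ 2 :=
    integral_congr_ae (by filter_upwards [h] with x hx; rw [hx])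
  have e2 : ∫ x, ‖f x‖ ^ 2 = ∫ x, ‖(h2.toLp f) x‖ ^ 2 :=
    integral_congr_ae (by filter_upwards [h2.coeFn_toLp] with x hx; rw [hx])
  rw [e1, e2, key, key, Lp.norm_fourier_eq]


/-- Inverse transform matching `ft`. -/
noncomputable def ift (U : ℝ → ℂ) (x : ℝ) : ℂ :=
  (1 / (2 * Real.pi) : ℂ) * ∫ ω : ℝ, Complex.exp (-(Complex.I * (ω : ℂ) * (x : ℂ))) * U ω

open FourierTransform in
lemma ift_eq (U : ℝ → ℂ) (x : ℝ) :
    ift U x = (1 / (2 * Real.pi) : ℂ) * 𝓕 U (x * (1 / (2 * Real.pi))) := by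
  unfold ift
  rw [Real.fourier_real_eq_integral_exp_smul]
  congr 2
  ext ω
  rw [smul_eq_mul]
  congr 2
  have : (Real.pi : ℂ) ≠ 0 := by exact_mod_cast Real.pi_ne_zero
  push_cast
  field_simp

open FourierTransform in
lemma ft_eq (t : ℝ → ℝ) (ω : ℝ) :
    ft t ω = 𝓕 (fun x => (t x : ℂ)) (ω * (-(1 / (2 * Real.pi)))) := by
  unfold ft
  rw [Real.fourier_real_eq_integral_exp_smul]
  congr 1
  ext x
  rw [smul_eq_mul]
  congr 2
  have : (Real.pi : ℂ) ≠ 0 := by exact_mod_cast Real.pi_ne_zero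
  push_cast
  field_simp

open FourierTransform in
lemma memLp_comp_mul {f : ℝ → ℂ} (hc : AEStronglyMeasurable f) {r : ℝ} (hr : r ≠ 0) :
    AEStronglyMeasurable (fun x => f (x * r)) := by
  refine hc.comp_quasiMeasurePreserving ?_
  refine ⟨by fun_prop, ?_⟩
  rw [Real.map_volume_mul_right hr]
  exact Measure.smul_absolutelyContinuous

open FourierTransform in
lemma fourier_continuous {f : ℝ → ℂ} (h1 : Integrable f) : Continuous (𝓕 f) :=
  (VectorFourier.fourierIntegral_continuous Real.continuous_fourierChar
      (by exact continuous_inner) h1)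

lemma sq_comp_mul {f : ℝ → ℂ} (hc : Continuous f) (hf : MemLp f 2) {r : ℝ} (hr : r ≠ 0) :
    MemLp (fun x => f (x * r)) 2 ∧ ∫ x, ‖f (x * r)‖ ^ 2 = |r|⁻¹ * ∫ x, ‖f x‖ ^ 2 := by
  constructor
  · rw [memLp_two_iff_integrable_sq_norm (by fun_prop)]
    have := (memLp_two_iff_integrable_sq_norm (by fun_prop)).1 hf
    exact this.comp_mul_right' hr
  · have := Measure.integral_comp_mul_right (fun x => ‖f x‖ ^ 2) r
    simpa [abs_inv] using this

lemma ift_continuous {U : ℝ → ℂ} (h1 : Integrable U) : Continuous (ift U) := by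
  have : ift U = fun x => _ := funext (ift_eq U)
  rw [this]
  have := fourier_continuous h1
  fun_prop

lemma ft_continuous {t : ℝ → ℝ} (h1 : Integrable t) : Continuous (ft t) := by
  have : ft t = fun x => _ := funext (ft_eq t)
  rw [this]
  have := fourier_continuous (h1.ofReal (𝕜 := ℂ))
  exact this.comp (by fun_prop)

lemma ift_l2 {U : ℝ → ℂ} (h1 : Integrable U) (h2 : MemLp U 2) :
    MemLp (ift U) 2 ∧ ∫ x, ‖ift U x‖ ^ 2 = (1 / (2 * Real.pi)) * ∫ x, ‖U x‖ ^ 2 := by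
  have hp := Real.pi_pos
  obtain ⟨a1, a2⟩ := plancherel U h1 h2
  obtain ⟨b1, b2⟩ := sq_comp_mul (fourier_continuous h1) a1 (r := 1 / (2 * Real.pi)) (by positivity)
  have : ift U = fun x => _ := funext (ift_eq U)
  constructor
  · rw [this]
    exact b1.const_mul _
  · rw [this]
    simp only [norm_mul, mul_pow]
    rw [integral_const_mul, b2, a2]
    have : ‖(1 / (2 * Real.pi) : ℂ)‖ = 1 / (2 * Real.pi) := by
      simp [abs_of_pos hp]
    rw [this, abs_of_pos (by positivity)]
    field_simp

lemma ft_l2 {t : ℝ → ℝ} (h1 : Integrable t) (h2 : MemLp t 2) :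
    MemLp (ft t) 2 ∧ ∫ x, ‖ft t x‖ ^ 2 = (2 * Real.pi) * ∫ x, (t x) ^ 2 := by
  have hp := Real.pi_pos
  have h1' := h1.ofReal (𝕜 := ℂ)
  have h2' : MemLp (fun x => (t x : ℂ)) 2 := h2.ofReal (K := ℂ)
  obtain ⟨a1, a2⟩ := plancherel _ h1' h2'
  obtain ⟨b1, b2⟩ := sq_comp_mul (fourier_continuous h1') a1 (r := -(1 / (2 * Real.pi)))
    (by rw [neg_ne_zero]; positivity)
  have : ft t = fun x => _ := funext (ft_eq t)
  constructor
  · rw [this]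
    exact b1
  · rw [this]
    refine b2.trans ?_
    rw [a2, abs_neg, abs_of_pos (by positivity)]
    simp

open FourierTransform in
lemma ft_ift {U : ℝ → ℂ} (hc : Continuous U) (h1 : Integrable U) {k : ℝ → ℝ}
    (hk : ∀ x, ift U x = (k x : ℂ)) (hki : Integrable k) : ft k = U := by
  have hp := Real.pi_pos
  have hpc : (Real.pi : ℂ) ≠ 0 := by exact_mod_cast Real.pi_ne_zero
  have e : ∀ x, 𝓕 U x = (2 * Real.pi : ℂ) * (k (x * (2 * Real.pi)) : ℂ) := by
    intro x
    rw [← hk, ift_eq]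
    have : x * (2 * Real.pi) * (1 / (2 * Real.pi)) = x := by field_simp
    rw [this]
    field_simp
  have hi : Integrable (𝓕 U) := by
    have : 𝓕 U = fun x => _ := funext e
    rw [this]
    exact ((hki.comp_mul_right' (by positivity : (2 * Real.pi) ≠ 0)).ofReal (𝕜 := ℂ)).const_mul _
  have inv := hc.fourierInv_fourier_eq h1 hi
  ext ω
  rw [← inv, Real.fourierInv_eq']
  unfold ft
  have := Measure.integral_comp_mul_right
    (fun x : ℝ => Complex.exp (Complex.I * (ω : ℂ) * (x : ℂ)) * (k x : ℂ)) (2 * Real.pi)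
  simp only [e, smul_eq_mul]
  rw [abs_of_pos (by positivity)] at this
  rw [show (∫ x : ℝ, Complex.exp (Complex.I * (ω : ℂ) * (x : ℂ)) * (k x : ℂ)) =
    (2 * Real.pi) • ∫ x : ℝ, Complex.exp (Complex.I * (ω : ℂ) * ((x * (2 * Real.pi) : ℝ) : ℂ)) *
      (k (x * (2 * Real.pi)) : ℂ) by
      rw [this, smul_smul, mul_inv_cancel₀ (by positivity), one_smul]]
  rw [Complex.real_smul, ← integral_const_mul]
  congr 1
  ext x
  have e2 : ((2 * Real.pi * inner ℝ x ω : ℝ) : ℂ) * Complex.I =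
      Complex.I * (ω : ℂ) * ((x * (2 * Real.pi) : ℝ) : ℂ) := by
    simp
    ring
  rw [e2]
  push_cast
  ring

lemma conv_ift {U : ℝ → ℂ} (h1 : Integrable U) {k g : ℝ → ℝ}
    (hk : ∀ x, ift U x = (k x : ℂ)) (hg : Integrable g) (y : ℝ) :
    ift (fun ω => U ω * ft g ω) y = ((∫ θ, g (y - θ) * k θ : ℝ) : ℂ) := by
  rw [← integral_complex_ofReal]
  simp only [Complex.ofReal_mul, ← hk]
  unfold ift ft
  rw [← integral_const_mul]
  simp only [← integral_const_mul]
  have hs : ∀ ω : ℝ, (∫ x : ℝ, (1 / (2 * Real.pi) : ℂ) * (Complex.exp (-(Complex.I * (ω : ℂ) * (y : ℂ))) *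
      (U ω * (Complex.exp (Complex.I * (ω : ℂ) * (x : ℂ)) * (g x : ℂ))))) =
      ∫ θ : ℝ, (g (y - θ) : ℂ) * ((1 / (2 * Real.pi) : ℂ) *
        (Complex.exp (-(Complex.I * (ω : ℂ) * (θ : ℂ))) * U ω)) := by
    intro ω
    rw [← integral_sub_left_eq_self _ volume y]
    congr 1
    ext θ
    have : Complex.exp (-(Complex.I * (ω : ℂ) * (θ : ℂ))) =
      Complex.exp (-(Complex.I * (ω : ℂ) * (y : ℂ))) *
        Complex.exp (Complex.I * (ω : ℂ) * ((y - θ : ℝ) : ℂ)) := by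
      rw [← Complex.exp_add]; congr 1; push_cast; ring
    rw [this]; ring
  simp only [hs]
  rw [integral_integral_swap]
  have hg2 : Integrable (fun θ => (g (y - θ) : ℂ)) := (hg.comp_sub_left y).ofReal
  have hp : Integrable (fun z : ℝ × ℝ => ((1 / (2 * Real.pi) : ℂ) * U z.1) * (g (y - z.2) : ℂ))
      (volume.prod volume) := Integrable.mul_prod (h1.const_mul _) hg2
  have hp2 := hp.bdd_mul (c := 1) (f := fun z : ℝ × ℝ => Complex.exp (-(Complex.I * (z.1 : ℂ) * (z.2 : ℂ))))
    (by fun_prop) (by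
      filter_upwards with z
      rw [Complex.norm_exp]
      simp)
  refine hp2.congr ?_
  filter_upwards with z
  simp only [Function.uncurry]
  ring

lemma ft_conv {f g : ℝ → ℝ} (hf : Integrable f) (hg : Integrable g) (ω : ℝ) :
    ft (fun y => ∫ θ, g (y - θ) * f θ) ω = ft f ω * ft g ω := by
  have hf' : Integrable (fun x => (f x : ℂ)) := hf.ofReal
  have hg' : Integrable (fun x => (g x : ℂ)) := hg.ofReal
  have := Real.fourier_mul_convolution_eq hf' hg' (ω * (-(1 / (2 * Real.pi))))
  rw [ft_eq, ft_eq, ft_eq, ← this]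
  have e : (fun y => ((∫ θ, g (y - θ) * f θ : ℝ) : ℂ)) =
      MeasureTheory.convolution (fun x => (f x : ℂ)) (fun x => (g x : ℂ))
        (ContinuousLinearMap.mul ℂ ℂ) volume := by
    ext y
    rw [MeasureTheory.convolution_def, ← integral_complex_ofReal]
    refine integral_congr_ae (Filter.Eventually.of_forall fun θ => ?_)
    simp [mul_comm]
  rw [e]

lemma ift_real {U : ℝ → ℂ} (hU : ∀ ω, U (-ω) = (starRingEnd ℂ) (U ω)) (x : ℝ) :
    ift U x = ((ift U x).re : ℂ) := by
  symm
  rw [← Complex.conj_eq_iff_re]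
  unfold ift
  rw [map_mul, ← integral_conj, ← integral_neg_eq_self]
  congr 1
  · have : (starRingEnd ℂ) 2 = 2 := Complex.conj_ofNat 2
    simp [this]
  · congr 1
    ext ω
    rw [map_mul, ← hU, ← Complex.exp_conj]
    simp

open FourierTransform in
lemma ift_iter {W : ℝ → ℂ} {v : ℕ} (hW : ContDiff ℝ v W) (hs : HasCompactSupport W) (x : ℝ) :
    ‖ift (iteratedDeriv v W) x‖ = |x| ^ v * ‖ift W x‖ := by
  have hp := Real.pi_pos
  have := Real.fourier_iteratedDeriv (N := (v : ℕ∞)) (n := v) (by exact_mod_cast hW) (by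
    intro n hn
    have hn' : n ≤ v := by exact_mod_cast hn
    refine Continuous.integrable_of_hasCompactSupport ?_ ?_
    · exact hW.continuous_iteratedDeriv n (by exact_mod_cast hn')
    · rw [iteratedDeriv_eq_equiv_comp]
      exact (hs.iteratedFDeriv n).comp_left (by simp)) le_rfl
  rw [ift_eq, ift_eq, this]
  simp only [norm_mul, norm_smul, norm_pow]
  have e : ‖(2 : ℂ)‖ * ‖(Real.pi : ℂ)‖ * ‖Complex.I‖ * ‖((x * (1 / (2 * Real.pi)) : ℝ) : ℂ)‖ = |x| := by
    simp [abs_of_pos hp, -Complex.ofReal_mul]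
    field_simp
  rw [e]; ring


lemma hellinger {p q E : ℝ → ℝ} (hp0 : ∀ y, 0 < p y) (hq0 : ∀ y, 0 ≤ q y)
    (hpi : Integrable p) (hqi : Integrable q) (hp1 : ∫ y, p y = 1) (hq1 : ∫ y, q y = 1)
    (hE : Integrable E) (hEb : ∀ y, (p y - q y) ^ 2 ≤ p y * E y) :
    Integrable (fun y => √(p y) * √(q y)) ∧ 1 - (∫ y, E y) / 2 ≤ ∫ y, √(p y) * √(q y) := by
  have hi : Integrable (fun y => √(p y) * √(q y)) := by
    refine (hpi.add hqi).mono' ?_ ?_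
    · exact (Real.continuous_sqrt.comp_aestronglyMeasurable hpi.aestronglyMeasurable).mul
        (Real.continuous_sqrt.comp_aestronglyMeasurable hqi.aestronglyMeasurable)
    · filter_upwards with y
      rw [Real.norm_of_nonneg (by positivity)]
      simp only [Pi.add_apply]
      nlinarith [Real.sq_sqrt (hp0 y).le, Real.sq_sqrt (hq0 y), sq_nonneg (√(p y) - √(q y)),
        sq_nonneg (√(p y) + √(q y))]
  refine ⟨hi, ?_⟩
  have hpq : Integrable (fun y => p y + q y) := hpi.add hqi
  have e : 1 - (∫ y, E y) / 2 = ∫ y, ((p y + q y) / 2 - E y / 2) := by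
    rw [integral_sub (hpq.div_const 2) (hE.div_const 2), integral_div, integral_div,
      integral_add hpi hqi, hp1, hq1]
    norm_num
  rw [e]
  refine integral_mono ((hpq.div_const 2).sub (hE.div_const 2)) hi ?_
  intro y
  simp only
  have h1 := Real.sq_sqrt (hp0 y).le
  have h2 := Real.sq_sqrt (hq0 y)
  have h3 := Real.sqrt_pos.2 (hp0 y)
  have h4 := Real.sqrt_nonneg (q y)
  set a := √(p y)
  set b := √(q y)
  have h5 := hEb y
  rw [← h1, ← h2] at h5 ⊢
  have h6 : a ^ 2 * (a - b) ^ 2 ≤ a ^ 2 * E y := by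
    refine le_trans ?_ h5
    have : (a ^ 2 - b ^ 2) ^ 2 = (a + b) ^ 2 * (a - b) ^ 2 := by ring
    rw [this]
    gcongr
    linarith
  have h7 : (a - b) ^ 2 ≤ E y := le_of_mul_le_mul_left h6 (by positivity)
  nlinarith

lemma lecam {n : ℕ} (hn : 0 < n) {p q E : ℝ → ℝ} (hp0 : ∀ y, 0 < p y) (hq0 : ∀ y, 0 ≤ q y)
    (hpi : Integrable p) (hqi : Integrable q) (hp1 : ∫ y, p y = 1) (hq1 : ∫ y, q y = 1)
    (hE : Integrable E) (hEb : ∀ y, (p y - q y) ^ 2 ≤ p y * E y) (hE1 : ∫ y, E y ≤ 1 / n)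
    (T : (Fin n → ℝ) → ℂ) (hT : Measurable T) (z w : ℂ) (D : ℝ) (hD0 : 0 ≤ D)
    (hD : 4 * D ≤ ‖w - z‖) :
    ENNReal.ofReal (D ^ 2) ≤ ∫⁻ y : Fin n → ℝ, ENNReal.ofReal (‖T y - z‖ ^ 2 * ∏ i, p (y i)) ∨
    ENNReal.ofReal (D ^ 2) ≤ ∫⁻ y : Fin n → ℝ, ENNReal.ofReal (‖T y - w‖ ^ 2 * ∏ i, q (y i)) := by
  obtain ⟨hi, hI⟩ := hellinger hp0 hq0 hpi hqi hp1 hq1 hE hEb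
  set I := ∫ y, √(p y) * √(q y) with hIdef
  have hn' : (1 : ℝ) ≤ n := by exact_mod_cast hn
  have hIn : 1 / 2 ≤ I ^ n := by
    have h1 : 1 + (n : ℝ) * (-(1 / (2 * n))) ≤ (1 + (-(1 / (2 * (n : ℝ))))) ^ n :=
      one_add_mul_le_pow (by
        have : 1 / (2 * (n : ℝ)) ≤ 1 / 2 := by
          apply one_div_le_one_div_of_le <;> linarith
        linarith) n
    have h2 : 1 + (n : ℝ) * (-(1 / (2 * n))) = 1 / 2 := by field_simp; norm_num
    have h3 : 1 + (-(1 / (2 * (n : ℝ)))) ≤ I := by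
      have : 1 / (2 * (n : ℝ)) = 1 / n / 2 := by field_simp
      linarith
    have h4 : 0 ≤ 1 + (-(1 / (2 * (n : ℝ)))) := by
      have : 1 / (2 * (n : ℝ)) ≤ 1 / 2 := by
          apply one_div_le_one_div_of_le <;> linarith
      linarith
    rw [← h2]
    exact h1.trans (pow_le_pow_left₀ h4 h3 n)
  -- the product functions
  have aem : ∀ {f : ℝ → ℝ}, Integrable f → AEMeasurable (fun y : Fin n → ℝ => ∏ i, f (y i)) := by
    intro f hf
    exact (Integrable.fintype_prod (μ := fun _ : Fin n => (volume : Measure ℝ))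
      (f := fun _ => f) (fun _ => hf)).aestronglyMeasurable.aemeasurable
  have one : ∀ {f : ℝ → ℝ}, (∀ y, 0 ≤ f y) → Integrable f → 
      ∫⁻ y : Fin n → ℝ, ENNReal.ofReal (∏ i, f (y i)) = ENNReal.ofReal ((∫ y, f y) ^ n) := by
    intro f h0 hf
    have := integral_fintype_prod_volume_eq_pow (ι := Fin n) f
    rw [Fintype.card_fin] at this
    rw [← this, ofReal_integral_eq_lintegral_ofReal]
    · exact Integrable.fintype_prod (μ := fun _ : Fin n => (volume : Measure ℝ))
        (f := fun _ => f) (fun _ => hf)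
    · filter_upwards with y
      exact Finset.prod_nonneg fun i _ => h0 _
  have hold : ∀ {p q : ℝ → ℝ}, (∀ y, 0 ≤ p y) → (∀ y, 0 ≤ q y) → Integrable p → Integrable q →
      ∫ y, q y = 1 → ∀ z : ℂ,
      ∫⁻ y : Fin n → ℝ, ENNReal.ofReal (‖T y - z‖ * (√(∏ i, p (y i)) * √(∏ i, q (y i)))) ≤
      (∫⁻ y : Fin n → ℝ, ENNReal.ofReal (‖T y - z‖ ^ 2 * ∏ i, p (y i))) ^ (1 / 2 : ℝ) := by
    intro p q hp0 hq0 hpi hqi hq1 z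
    have := ENNReal.lintegral_mul_le_Lp_mul_Lq (volume : Measure (Fin n → ℝ)) (p := 2) (q := 2)
      (Real.HolderConjugate.two_two)
      (f := fun y => ENNReal.ofReal (‖T y - z‖ * √(∏ i, p (y i))))
      (g := fun y => ENNReal.ofReal (√(∏ i, q (y i))))
      (((hT.sub_const z).norm.aemeasurable.mul (aem hpi).sqrt).ennreal_ofReal)
      ((aem hqi).sqrt.ennreal_ofReal)
    have e2 : ∫⁻ y : Fin n → ℝ, ENNReal.ofReal (√(∏ i, q (y i))) ^ (2 : ℝ) = 1 := by
      have : ∀ y : Fin n → ℝ, ENNReal.ofReal (√(∏ i, q (y i))) ^ (2 : ℝ) =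
          ENNReal.ofReal (∏ i, q (y i)) := by
        intro y
        rw [ENNReal.ofReal_rpow_of_nonneg (Real.sqrt_nonneg _) (by norm_num), Real.rpow_two,
          Real.sq_sqrt (Finset.prod_nonneg fun i _ => hq0 _)]
      simp only [this]
      rw [one hq0 hqi, hq1]; simp
    have e1 : ∀ y : Fin n → ℝ, ENNReal.ofReal (‖T y - z‖ * √(∏ i, p (y i))) ^ (2 : ℝ) =
          ENNReal.ofReal (‖T y - z‖ ^ 2 * ∏ i, p (y i)) := by
        intro y
        rw [ENNReal.ofReal_rpow_of_nonneg (by positivity) (by norm_num), Real.rpow_two, mul_pow,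
          Real.sq_sqrt (Finset.prod_nonneg fun i _ => hp0 _)]
    simp only [e1, e2, ENNReal.one_rpow, mul_one] at this
    refine le_trans (le_of_eq ?_) this
    apply lintegral_congr
    intro y
    simp only [Pi.mul_apply]
    rw [← ENNReal.ofReal_mul (by positivity), mul_assoc]
  by_contra hcon
  push Not at hcon
  obtain ⟨c1, c2⟩ := hcon
  have half : ∀ {R : ENNReal}, R < ENNReal.ofReal (D ^ 2) → R ^ (1 / 2 : ℝ) < ENNReal.ofReal D := by
    intro R hR
    have := ENNReal.rpow_lt_rpow hR (by norm_num : (0 : ℝ) < 1 / 2)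
    rwa [ENNReal.ofReal_rpow_of_nonneg (by positivity) (by norm_num), ← Real.sqrt_eq_rpow,
      Real.sqrt_sq hD0] at this
  have b1 := (hold (fun y => (hp0 y).le) hq0 hpi hqi hq1 z).trans_lt (half c1)
  have b2 := (hold hq0 (fun y => (hp0 y).le) hqi hpi hp1 w).trans_lt (half c2)
  have b3 := ENNReal.add_lt_add b1 b2
  have hm : AEMeasurable (fun y : Fin n → ℝ =>
      ENNReal.ofReal (‖T y - z‖ * (√(∏ i, p (y i)) * √(∏ i, q (y i))))) :=
    ((hT.sub_const z).norm.aemeasurable.mul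
      ((aem hpi).sqrt.mul (aem hqi).sqrt)).ennreal_ofReal
  rw [← lintegral_add_left' hm, ← ENNReal.ofReal_add hD0 hD0] at b3
  have b4 : ENNReal.ofReal (4 * D) * ENNReal.ofReal (I ^ n) ≤ ∫⁻ y : Fin n → ℝ,
    (ENNReal.ofReal (‖T y - z‖ * (√(∏ i, p (y i)) * √(∏ i, q (y i)))) +
    ENNReal.ofReal (‖T y - w‖ * (√(∏ i, q (y i)) * √(∏ i, p (y i))))) := by
    rw [← one (fun y => by positivity) hi, ← lintegral_const_mul' _ _ ENNReal.ofReal_ne_top]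
    apply lintegral_mono
    intro y
    simp only
    rw [← ENNReal.ofReal_add (by positivity) (by positivity), ← ENNReal.ofReal_mul (by positivity)]
    apply ENNReal.ofReal_le_ofReal
    rw [Finset.prod_mul_distrib, ← Real.sqrt_prod _ (fun i _ => (hp0 _).le),
      ← Real.sqrt_prod _ (fun i _ => hq0 _), mul_comm (√(∏ i, q (y i))), ← add_mul]
    gcongr
    refine hD.trans ?_
    have : w - z = (T y - z) - (T y - w) := by ring
    rw [this]
    exact norm_sub_le _ _
  have b5 := b4.trans_lt b3
  rw [← ENNReal.ofReal_mul (by positivity)] at b5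
  have b6 := (ENNReal.ofReal_lt_ofReal_iff_of_nonneg (by positivity)).1 b5
  nlinarith


/-- Gaussian density with transform `exp (-c ω²)`. -/
noncomputable def gs (c x : ℝ) : ℝ := (√(4 * Real.pi * c))⁻¹ * Real.exp (-(1 / (4 * c)) * x ^ 2)

lemma gs_nonneg (c x : ℝ) : 0 ≤ gs c x := by unfold gs; positivity

lemma gs_integrable {c : ℝ} (hc : 0 < c) : Integrable (gs c) := by
  unfold gs
  exact (integrable_exp_neg_mul_sq (by positivity)).const_mul _

lemma gs_ft {c : ℝ} (hc : 0 < c) (ω : ℝ) : ft (gs c) ω = (Real.exp (-c * ω ^ 2) : ℂ) := by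
  have hp := Real.pi_pos
  have := fourierIntegral_gaussian (b := ((1 / (4 * c) : ℝ) : ℂ)) (by
    rw [Complex.ofReal_re]; positivity) (ω : ℂ)
  unfold ft gs
  have e : ∀ x : ℝ, Complex.exp (Complex.I * (ω : ℂ) * (x : ℂ)) *
      (((√(4 * Real.pi * c))⁻¹ * Real.exp (-(1 / (4 * c)) * x ^ 2) : ℝ) : ℂ) =
      (((√(4 * Real.pi * c))⁻¹ : ℝ) : ℂ) * (Complex.exp (Complex.I * (ω : ℂ) * (x : ℂ)) *
        Complex.exp (-((1 / (4 * c) : ℝ) : ℂ) * x ^ 2)) := by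
    intro x; push_cast; ring
  simp only [e]
  rw [integral_const_mul, this]
  have e2 : ((Real.pi : ℂ) / ((1 / (4 * c) : ℝ) : ℂ)) ^ (1 / 2 : ℂ) = ((√(4 * Real.pi * c) : ℝ) : ℂ) := by
    rw [Real.sqrt_eq_rpow, Complex.ofReal_cpow (by positivity)]
    congr 1
    · push_cast; field_simp
    · push_cast; rfl
  rw [e2, ← mul_assoc, ← Complex.ofReal_mul, inv_mul_cancel₀ (by positivity), Complex.ofReal_one,
    one_mul]
  push_cast
  congr 1
  have : (c : ℂ) ≠ 0 := by exact_mod_cast hc.ne'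
  field_simp

lemma ft_zero (t : ℝ → ℝ) : ft t 0 = ((∫ x, t x : ℝ) : ℂ) := by
  unfold ft
  rw [← integral_complex_ofReal]
  simp

lemma gs_one {c : ℝ} (hc : 0 < c) : ∫ x, gs c x = 1 := by
  have := gs_ft hc 0
  rw [ft_zero] at this
  simp at this
  exact_mod_cast this

lemma conv_integrand {g f : ℝ → ℝ} (hg : Integrable g) (hf : Integrable f) :
    Integrable (fun y => ∫ θ, g (y - θ) * f θ) := by
  have := hf.integrable_convolution (ContinuousLinearMap.mul ℝ ℝ) hg
  refine this.congr (Filter.Eventually.of_forall fun y => ?_)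
  simp only [MeasureTheory.convolution_def]
  refine integral_congr_ae (Filter.Eventually.of_forall fun θ => ?_)
  simp [mul_comm]

lemma conv_int {g f : ℝ → ℝ} (hg : Integrable g) (hf : Integrable f) :
    ∫ y, ∫ θ, g (y - θ) * f θ = (∫ y, g y) * ∫ y, f y := by
  have := integral_convolution (ContinuousLinearMap.mul ℝ ℝ) hf hg
    (μ := volume) (ν := volume)
  simp only [MeasureTheory.convolution_def, ContinuousLinearMap.mul_apply'] at this
  rw [mul_comm, ← this]
  simp only [mul_comm]

lemma ft_add {f g : ℝ → ℝ} (hf : Integrable f) (hg : Integrable g) (a b ω : ℝ) :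
    ft (fun x => a * f x + b * g x) ω = a * ft f ω + b * ft g ω := by
  have key : ∀ {f : ℝ → ℝ}, Integrable f → 
      Integrable (fun x : ℝ => Complex.exp (Complex.I * (ω : ℂ) * (x : ℂ)) * (f x : ℂ)) := by
    intro f hf
    have hf' : Integrable (fun x => (f x : ℂ)) := hf.ofReal
    refine hf'.bdd_mul (c := 1) (by fun_prop) (Filter.Eventually.of_forall fun x => ?_)
    rw [Complex.norm_exp]; simp
  unfold ft
  rw [← integral_const_mul, ← integral_const_mul, ← integral_add ((key hf).const_mul _)
    ((key hg).const_mul _)]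
  congr 1
  ext x
  push_cast
  ring

lemma ft_norm_le (t : ℝ → ℝ) (ω : ℝ) : ‖ft t ω‖ ≤ ∫ x, |t x| := by
  unfold ft
  refine (norm_integral_le_integral_norm _).trans (le_of_eq ?_)
  congr 1
  ext x
  rw [norm_mul, Complex.norm_exp]
  simp

/-- The candidate density. -/
noncomputable def cand (lam c δ : ℝ) (r : ℝ → ℝ) (x : ℝ) : ℝ :=
  (1 - δ * ∫ y, r y) * gs lam x + δ * ∫ θ, gs c (x - θ) * r θ

lemma cand_integrable {lam c δ : ℝ} {r : ℝ → ℝ} (hl : 0 < lam) (hc : 0 < c) (hr : Integrable r) :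
    Integrable (cand lam c δ r) :=
  ((gs_integrable hl).const_mul _).add ((conv_integrand (gs_integrable hc) hr).const_mul _)

lemma cand_ft {lam c δ : ℝ} {r : ℝ → ℝ} (hl : 0 < lam) (hc : 0 < c) (hr : Integrable r) (ω : ℝ) :
    ft (cand lam c δ r) ω = ((1 - δ * ∫ y, r y : ℝ) : ℂ) * (Real.exp (-lam * ω ^ 2) : ℂ) +
      δ * (ft r ω * (Real.exp (-c * ω ^ 2) : ℂ)) := by
  have := ft_add (gs_integrable hl) (conv_integrand (gs_integrable hc) hr)
    (1 - δ * ∫ y, r y) δ ω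
  rw [gs_ft hl, ft_conv hr (gs_integrable hc), gs_ft hc] at this
  exact this

lemma cand_nonneg {lam c δ : ℝ} {r : ℝ → ℝ} (hδ : 0 ≤ δ) (hr0 : ∀ x, 0 ≤ r x)
    (h1 : δ * ∫ y, r y ≤ 1) (x : ℝ) : 0 ≤ cand lam c δ r x := by
  unfold cand
  have : 0 ≤ ∫ θ, gs c (x - θ) * r θ :=
    integral_nonneg fun θ => mul_nonneg (gs_nonneg _ _) (hr0 _)
  have := gs_nonneg lam x
  have : 0 ≤ 1 - δ * ∫ y, r y := by linarith
  positivity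

lemma cand_one {lam c δ : ℝ} {r : ℝ → ℝ} (hl : 0 < lam) (hc : 0 < c) (hr : Integrable r) :
    ∫ x, cand lam c δ r x = 1 := by
  unfold cand
  rw [integral_add ((gs_integrable hl).const_mul _)
    ((conv_integrand (gs_integrable hc) hr).const_mul _), integral_const_mul, integral_const_mul,
    conv_int (gs_integrable hc) hr, gs_one hl, gs_one hc]
  ring

lemma cand_ft_integrable {lam c δ : ℝ} {r φ : ℝ → ℝ} (hl : 0 < lam) (hc : 0 < c)
    (hr : Integrable r) (hφ : Integrable φ) :
    Integrable (fun ω => ‖ft (cand lam c δ r) ω‖ * ‖ft φ ω‖) := by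
  have h1 : Integrable (ft (cand lam c δ r)) := by
    have : ft (cand lam c δ r) = fun ω => _ := funext (cand_ft hl hc hr)
    rw [this]
    have a1 : Integrable (fun ω : ℝ => (Real.exp (-lam * ω ^ 2) : ℂ)) :=
      (integrable_exp_neg_mul_sq hl).ofReal
    have a2 : Integrable (fun ω : ℝ => (Real.exp (-c * ω ^ 2) : ℂ)) :=
      (integrable_exp_neg_mul_sq hc).ofReal
    refine (a1.const_mul _).add (Integrable.const_mul ?_ _)
    exact a2.bdd_mul (ft_continuous hr).aestronglyMeasurable
      (Filter.Eventually.of_forall fun ω => ft_norm_le r ω)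
  refine h1.norm.mul_bdd (c := ∫ x, |φ x|) (ft_continuous hφ).norm.aestronglyMeasurable
    (Filter.Eventually.of_forall fun ω => ?_)
  simpa using ft_norm_le φ ω

lemma cand_sobolev {lam κ δ m s : ℝ} {r : ℝ → ℝ} (hl : s / 2 < lam) (hs : 0 ≤ s) (hκ : s / 2 ≤ κ)
    (hκ0 : 0 < κ) (hm : 1 ≤ m) (hδ : 0 ≤ δ) (hr0 : ∀ x, 0 ≤ r x) (h1 : δ * ∫ y, r y ≤ 1)
    (hr : Integrable r) (hr2 : MemLp r 2) :
    ∫ ω : ℝ, ‖ft (cand lam (κ / m ^ 2) δ r) ω‖ ^ 2 * (ω ^ 2 + 1) ^ s ≤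
      2 * √(Real.pi / (2 * lam - s)) + 4 * Real.pi * (δ ^ 2 * m ^ (2 * s)) * ∫ x, (r x) ^ 2 := by
  have hl0 : 0 < lam := by linarith
  have hm0 : 0 < m := by linarith
  have hc0 : 0 < κ / m ^ 2 := by positivity
  obtain ⟨l1, l2⟩ := ft_l2 hr hr2
  have hi1 : Integrable (fun ω : ℝ => 2 * Real.exp (-(2 * lam - s) * ω ^ 2)) :=
    (integrable_exp_neg_mul_sq (by linarith)).const_mul _
  have hi2 : Integrable (fun ω : ℝ => (2 * (δ ^ 2 * m ^ (2 * s))) * ‖ft r ω‖ ^ 2) :=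
    ((memLp_two_iff_integrable_sq_norm (ft_continuous hr).aestronglyMeasurable).1 l1).const_mul _
  have e : 2 * √(Real.pi / (2 * lam - s)) + 4 * Real.pi * (δ ^ 2 * m ^ (2 * s)) * ∫ x, (r x) ^ 2 =
      ∫ ω : ℝ, (2 * Real.exp (-(2 * lam - s) * ω ^ 2) +
        (2 * (δ ^ 2 * m ^ (2 * s))) * ‖ft r ω‖ ^ 2) := by
    rw [integral_add hi1 hi2, integral_const_mul, integral_const_mul, l2, integral_gaussian]
    ring
  rw [e]
  refine integral_mono_of_nonneg (Filter.Eventually.of_forall fun ω => by positivity)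
    (hi1.add hi2) (Filter.Eventually.of_forall fun ω => ?_)
  simp only
  rw [cand_ft hl0 hc0 hr]
  set A := ((1 - δ * ∫ y, r y : ℝ) : ℂ) * (Real.exp (-lam * ω ^ 2) : ℂ)
  set Q := (δ : ℂ) * (ft r ω * (Real.exp (-(κ / m ^ 2) * ω ^ 2) : ℂ))
  have hA : ‖A‖ ≤ Real.exp (-lam * ω ^ 2) := by
    have hr1 : 0 ≤ ∫ y, r y := integral_nonneg hr0
    have : |1 - δ * ∫ y, r y| ≤ 1 := by
      rw [abs_le]; constructor <;> nlinarith
    rw [norm_mul, Complex.norm_real, Complex.norm_real, Real.norm_eq_abs, Real.norm_eq_abs,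
      Real.abs_exp]
    exact mul_le_of_le_one_left (by positivity) this
  have hQ : ‖Q‖ = δ * ‖ft r ω‖ * Real.exp (-(κ / m ^ 2) * ω ^ 2) := by
    rw [norm_mul, norm_mul, Complex.norm_real, Complex.norm_real, Real.norm_of_nonneg hδ,
      Real.norm_of_nonneg (Real.exp_pos _).le]
    ring
  have hAQ : ‖A + Q‖ ^ 2 ≤ 2 * ‖A‖ ^ 2 + 2 * ‖Q‖ ^ 2 := by
    have := norm_add_le A Q
    have h0 := norm_nonneg (A + Q)
    nlinarith [sq_nonneg (‖A‖ - ‖Q‖)]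
  have p1 : (ω ^ 2 + 1) ^ s ≤ Real.exp (s * ω ^ 2) := by
    rw [mul_comm, Real.exp_mul]
    exact Real.rpow_le_rpow (by positivity) (Real.add_one_le_exp _) hs
  have p2 : (ω ^ 2 + 1) ^ s ≤ m ^ (2 * s) * Real.exp (s * (ω ^ 2 / m ^ 2)) := by
    rw [mul_comm s, Real.exp_mul, Real.rpow_mul hm0.le, Real.rpow_two, ← Real.mul_rpow (by positivity)
      (by positivity)]
    refine Real.rpow_le_rpow (by positivity) ?_ hs
    have h3 := Real.add_one_le_exp (ω ^ 2 / m ^ 2)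
    have : m ^ 2 * (ω ^ 2 / m ^ 2 + 1) = ω ^ 2 + m ^ 2 := by field_simp
    nlinarith [sq_nonneg m]
  calc ‖A + Q‖ ^ 2 * (ω ^ 2 + 1) ^ s ≤ (2 * ‖A‖ ^ 2 + 2 * ‖Q‖ ^ 2) * (ω ^ 2 + 1) ^ s := by gcongr
    _ = 2 * (‖A‖ ^ 2 * (ω ^ 2 + 1) ^ s) + 2 * (‖Q‖ ^ 2 * (ω ^ 2 + 1) ^ s) := by ring
    _ ≤ 2 * (Real.exp (-lam * ω ^ 2) ^ 2 * Real.exp (s * ω ^ 2)) +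
        2 * (‖Q‖ ^ 2 * (m ^ (2 * s) * Real.exp (s * (ω ^ 2 / m ^ 2)))) := by gcongr
    _ ≤ _ := by
      have q1 : Real.exp (-lam * ω ^ 2) ^ 2 * Real.exp (s * ω ^ 2) =
          Real.exp (-(2 * lam - s) * ω ^ 2) := by
        rw [← Real.exp_nat_mul, ← Real.exp_add]; congr 1; push_cast; ring
      have q2 : Real.exp (-(κ / m ^ 2) * ω ^ 2) ^ 2 * Real.exp (s * (ω ^ 2 / m ^ 2)) ≤ 1 := by
        rw [← Real.exp_nat_mul, ← Real.exp_add, Real.exp_le_one_iff]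
        have : ((2 : ℕ) : ℝ) * (-(κ / m ^ 2) * ω ^ 2) + s * (ω ^ 2 / m ^ 2) =
          -((2 * κ - s) * (ω ^ 2 / m ^ 2)) := by push_cast; ring
        rw [this]
        have : 0 ≤ 2 * κ - s := by linarith
        have : 0 ≤ (2 * κ - s) * (ω ^ 2 / m ^ 2) := by positivity
        linarith
      rw [q1, hQ]
      have : (δ * ‖ft r ω‖ * Real.exp (-(κ / m ^ 2) * ω ^ 2)) ^ 2 *
          (m ^ (2 * s) * Real.exp (s * (ω ^ 2 / m ^ 2))) =
          (δ ^ 2 * m ^ (2 * s) * ‖ft r ω‖ ^ 2) *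
            (Real.exp (-(κ / m ^ 2) * ω ^ 2) ^ 2 * Real.exp (s * (ω ^ 2 / m ^ 2))) := by ring
      rw [this]
      have : (δ ^ 2 * m ^ (2 * s) * ‖ft r ω‖ ^ 2) *
            (Real.exp (-(κ / m ^ 2) * ω ^ 2) ^ 2 * Real.exp (s * (ω ^ 2 / m ^ 2))) ≤
            (δ ^ 2 * m ^ (2 * s) * ‖ft r ω‖ ^ 2) * 1 := by gcongr
      linarith


lemma iter_cexp (j : ℕ) : iteratedDeriv j (fun x : ℝ => Complex.exp ((x : ℂ) * Complex.I)) =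
    fun x : ℝ => Complex.I ^ j * Complex.exp ((x : ℂ) * Complex.I) := by
  induction j with
  | zero => ext x; simp
  | succ j ih =>
    rw [iteratedDeriv_succ, ih]
    ext x
    have h1 : HasDerivAt (fun x : ℝ => (x : ℂ) * Complex.I) (1 * Complex.I) x :=
      (Complex.ofRealCLM.hasDerivAt (x := x)).mul_const _
    have := (h1.cexp.const_mul (Complex.I ^ j)).deriv
    rw [this]
    ring

/-- bounded derivatives up to order `v` on `S` relative to a weight `w` -/
def DB (S : Set ℝ) (v : ℕ) (w : ℝ → ℝ) (f : ℝ → ℂ) : Prop :=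
  ContDiffOn ℝ v f S ∧ ∀ j ≤ v, ∀ x ∈ S, ‖iteratedFDerivWithin ℝ j f S x‖ ≤ w x

lemma DB.mul {S : Set ℝ} (hS : IsOpen S) {v : ℕ} {w₁ w₂ : ℝ → ℝ} {f g : ℝ → ℂ}
    (hf : DB S v w₁ f) (hg : DB S v w₂ g) :
    DB S v (fun x => 2 ^ v * (w₁ x * w₂ x)) (fun x => f x * g x) := by
  refine ⟨hf.1.mul hg.1, fun j hj x hx => ?_⟩
  have hw1 : 0 ≤ w₁ x := (norm_nonneg _).trans (hf.2 0 (Nat.zero_le _) x hx)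
  have hw2 : 0 ≤ w₂ x := (norm_nonneg _).trans (hg.2 0 (Nat.zero_le _) x hx)
  refine (norm_iteratedFDerivWithin_mul_le hf.1 hg.1 hS.uniqueDiffOn hx
    (by exact_mod_cast hj)).trans ?_
  have : ∀ i ∈ Finset.range (j + 1), (j.choose i : ℝ) * ‖iteratedFDerivWithin ℝ i f S x‖ *
        ‖iteratedFDerivWithin ℝ (j - i) g S x‖ ≤ (j.choose i : ℝ) * (w₁ x * w₂ x) := by
    intro i hi
    rw [Finset.mem_range] at hi
    rw [mul_assoc]
    gcongr
    · exact hf.2 i (by omega) x hx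
    · exact hg.2 (j - i) (by omega) x hx
  refine (Finset.sum_le_sum this).trans ?_
  rw [← Finset.sum_mul]
  have e : ∑ i ∈ Finset.range (j + 1), (j.choose i : ℝ) = 2 ^ j := by
    exact_mod_cast Nat.sum_range_choose j
  rw [e]
  show (2:ℝ) ^ j * (w₁ x * w₂ x) ≤ 2 ^ v * (w₁ x * w₂ x)
  have h2 : (2:ℝ) ^ j ≤ 2 ^ v := pow_le_pow_right₀ (by norm_num) hj
  exact mul_le_mul_of_nonneg_right h2 (mul_nonneg hw1 hw2)

lemma DB_of_smooth {S : Set ℝ} (hS : IsOpen S) {v : ℕ} {f : ℝ → ℂ} {w : ℝ → ℝ} (hf : ContDiff ℝ v f)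
    (hb : ∀ j ≤ v, ∀ x, ‖iteratedDeriv j f x‖ ≤ w x) : DB S v w f := by
  refine ⟨hf.contDiffOn, fun j hj x hx => ?_⟩
  rw [iteratedFDerivWithin_of_isOpen j hS hx, norm_iteratedFDeriv_eq_norm_iteratedDeriv]
  exact hb j hj x

lemma DB_phase {ω₀ ρbar : ℝ} {v : ℕ} {ρ : ℝ → ℝ}
    (hρ_smooth : ContDiffOn ℝ v ρ {ω : ℝ | ω₀ ≤ |ω|})
    (hρbdd : ∀ j : ℕ, j ≤ v → ∀ ω : ℝ, ω₀ ≤ |ω| →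
      |iteratedDerivWithin j ρ {ω' : ℝ | ω₀ ≤ |ω'|} ω| ≤ ρbar) :
    ∃ C : ℝ, 0 ≤ C ∧ DB {ω : ℝ | ω₀ < |ω|} v (fun _ => C)
      (fun ω => Complex.exp ((ρ ω : ℂ) * Complex.I)) := by
  have hS : IsOpen {ω : ℝ | ω₀ < |ω|} := isOpen_lt continuous_const continuous_abs
  have hsub : {ω : ℝ | ω₀ < |ω|} ⊆ {ω : ℝ | ω₀ ≤ |ω|} := fun x hx => le_of_lt (show ω₀ < |x| from hx)
  have hρ' := hρ_smooth.mono hsub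
  set D := max 1 ρbar
  have hD1 : 1 ≤ D := le_max_left _ _
  have hg : ContDiff ℝ v (fun x : ℝ => Complex.exp ((x : ℂ) * Complex.I)) :=
    (Complex.ofRealCLM.contDiff.mul contDiff_const).cexp
  refine ⟨v.factorial * 1 * D ^ v, by positivity, ?_, ?_⟩
  · exact hg.comp_contDiffOn hρ'
  · intro j hj x hx
    have := norm_iteratedFDerivWithin_comp_le (𝕜 := ℝ) (t := Set.univ) (n := j) (C := 1) (D := D)
      hg.contDiffOn hρ' (by exact_mod_cast hj) uniqueDiffOn_univ hS.uniqueDiffOn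
      (Set.mapsTo_univ _ _) hx (by
        intro i hi
        rw [iteratedFDerivWithin_univ, norm_iteratedFDeriv_eq_norm_iteratedDeriv, iter_cexp]
        simp [Complex.norm_exp]) (by
        intro i hi1 hi2
        have e : iteratedFDerivWithin ℝ i ρ {ω : ℝ | ω₀ < |ω|} x =
            iteratedFDerivWithin ℝ i ρ {ω : ℝ | ω₀ ≤ |ω|} x := by
          apply iteratedFDerivWithin_congr_set
          have m1 : {ω : ℝ | ω₀ < |ω|} ∈ nhds x := hS.mem_nhds hx
          filter_upwards [m1] with y hy
          apply propext
          exact ⟨fun h => hsub h, fun h => hy⟩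
        rw [e, norm_iteratedFDerivWithin_eq_norm_iteratedDerivWithin, Real.norm_eq_abs]
        refine (hρbdd i (hi2.trans hj) x (hsub hx)).trans ?_
        refine (le_max_right 1 ρbar).trans ?_
        exact le_self_pow₀ hD1 (by omega))
    refine this.trans ?_
    show (j.factorial : ℝ) * 1 * D ^ j ≤ v.factorial * 1 * D ^ v
    gcongr

lemma bump_deriv {β : ℝ → ℝ} (hβ : ContDiff ℝ (⊤ : ℕ∞) β) (hβc : HasCompactSupport β) (v : ℕ) :
    ∃ C : ℝ, 0 ≤ C ∧ ∀ m : ℝ, 1 ≤ m → ∀ j ≤ v, ∀ x,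
      ‖iteratedDeriv j (fun ω : ℝ => ((β (m⁻¹ * ω) : ℝ) : ℂ)) x‖ ≤ C := by
  set b : ℝ → ℂ := fun x => (β x : ℂ)
  have hb : ContDiff ℝ (⊤ : ℕ∞) b := Complex.ofRealCLM.contDiff.comp hβ
  have hbc : HasCompactSupport b := hβc.comp_left (g := fun x : ℝ => (x : ℂ)) (by simp)
  have h1 : ∀ j : ℕ, ∃ C : ℝ, ∀ x, ‖iteratedDeriv j b x‖ ≤ C := by
    intro j
    have hc : Continuous (iteratedDeriv j b) := hb.continuous_iteratedDeriv j (by exact_mod_cast le_top)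
    have hs : HasCompactSupport (iteratedDeriv j b) := by
      rw [iteratedDeriv_eq_equiv_comp]
      exact (hbc.iteratedFDeriv j).comp_left (by simp)
    exact hs.exists_bound_of_continuous hc
  choose C hC using h1
  have hC0 : ∀ j, 0 ≤ C j := fun j => (norm_nonneg _).trans (hC j 0)
  refine ⟨∑ j ∈ Finset.range (v + 1), C j, Finset.sum_nonneg fun j _ => hC0 j, ?_⟩
  intro m hm j hj x
  have e := iteratedDeriv_comp_const_smul (n := j) (hb.of_le (by exact_mod_cast le_top)) (m⁻¹)
  have e2 : iteratedDeriv j (fun ω : ℝ => ((β (m⁻¹ * ω) : ℝ) : ℂ)) x = _ := congrFun e x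
  rw [e2, norm_smul, norm_pow, norm_inv, Real.norm_of_nonneg (by linarith)]
  have h2 : (m⁻¹) ^ j ≤ 1 := pow_le_one₀ (by positivity) (inv_le_one_of_one_le₀ hm)
  calc (m⁻¹) ^ j * ‖iteratedDeriv j b (m⁻¹ * x)‖ ≤ 1 * C j := by
        gcongr
        exact hC _ _
    _ = C j := one_mul _
    _ ≤ _ := Finset.single_le_sum (fun i _ => hC0 i) (Finset.mem_range.2 (by omega))

lemma lemmaD {ω₀ ρbar : ℝ} {v : ℕ} {ρ : ℝ → ℝ}
    (hρ_smooth : ContDiffOn ℝ v ρ {ω : ℝ | ω₀ ≤ |ω|})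
    (hρbdd : ∀ j : ℕ, j ≤ v → ∀ ω : ℝ, ω₀ ≤ |ω| →
      |iteratedDerivWithin j ρ {ω' : ℝ | ω₀ ≤ |ω'|} ω| ≤ ρbar)
    {β : ℝ → ℝ} (hβ : ContDiff ℝ (⊤ : ℕ∞) β) (hβs : ∀ u, β u ≠ 0 → 1 ≤ |u| ∧ |u| ≤ 2)
    {G : ℝ → ℂ} (hG : ContDiff ℝ v G) {K : ℝ} (hK : 0 ≤ K)
    (hGb : ∀ j ≤ v, ∀ x, ‖iteratedDeriv j G x‖ ≤ K * ‖G x‖) :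
    ∃ C : ℝ, 0 ≤ C ∧ ∀ m : ℝ, 1 ≤ m → ω₀ < m →
      ContDiff ℝ v (fun ω => ((β (m⁻¹ * ω) : ℝ) : ℂ) * Complex.exp ((ρ ω : ℂ) * Complex.I) * G ω) ∧
      ∀ j ≤ v, ∀ x, (‖iteratedDeriv j (fun ω => ((β (m⁻¹ * ω) : ℝ) : ℂ) *
          Complex.exp ((ρ ω : ℂ) * Complex.I) * G ω) x‖ ≤ C * ‖G x‖) ∧
        (iteratedDeriv j (fun ω => ((β (m⁻¹ * ω) : ℝ) : ℂ) *
          Complex.exp ((ρ ω : ℂ) * Complex.I) * G ω) x ≠ 0 → m ≤ |x| ∧ |x| ≤ 2 * m) := by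
  have hβc : HasCompactSupport β := by
    refine HasCompactSupport.intro (isCompact_Icc (a := (-2 : ℝ)) (b := 2)) ?_
    intro x hx
    by_contra h
    exact hx (abs_le.1 (hβs x h).2)
  obtain ⟨C1, hC1, hb1⟩ := bump_deriv hβ hβc v
  obtain ⟨C2, hC2, hb2⟩ := DB_phase hρ_smooth hρbdd
  have hS : IsOpen {ω : ℝ | ω₀ < |ω|} := isOpen_lt continuous_const continuous_abs
  refine ⟨2 ^ v * (2 ^ v * (C1 * C2) * K), by positivity, ?_⟩
  intro m hm hmω
  have hm0 : 0 < m := by linarith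
  set W : ℝ → ℂ := fun ω => ((β (m⁻¹ * ω) : ℝ) : ℂ) * Complex.exp ((ρ ω : ℂ) * Complex.I) * G ω
  have hbs : ContDiff ℝ v (fun ω : ℝ => ((β (m⁻¹ * ω) : ℝ) : ℂ)) :=
    Complex.ofRealCLM.contDiff.comp ((hβ.of_le (by exact_mod_cast le_top)).comp
      (contDiff_const.mul contDiff_id))
  have hDB : DB {ω : ℝ | ω₀ < |ω|} v _ W :=
    ((DB_of_smooth (w := fun _ => C1) hS hbs (hb1 m hm)).mul hS hb2).mul hS
      (DB_of_smooth hS hG hGb)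
  have hz : ∀ x, ¬ (m ≤ |x| ∧ |x| ≤ 2 * m) → W =ᶠ[nhds x] fun _ => 0 := by
    intro x hx
    have hcl : IsClosed {x : ℝ | m ≤ |x| ∧ |x| ≤ 2 * m} :=
      (isClosed_le continuous_const continuous_abs).inter
        (isClosed_le continuous_abs continuous_const)
    filter_upwards [hcl.isOpen_compl.mem_nhds hx] with y hy
    by_contra h
    apply hy
    have h0 : β (m⁻¹ * y) ≠ 0 := by
      intro h0; apply h; simp [W, h0]
    have := hβs _ h0
    rw [abs_mul, abs_inv, abs_of_pos hm0, inv_mul_eq_div, le_div_iff₀ hm0, div_le_iff₀ hm0] at this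
    exact ⟨by linarith, this.2⟩
  have hiz : ∀ x, ¬ (m ≤ |x| ∧ |x| ≤ 2 * m) → ∀ j, iteratedDeriv j W x = 0 := by
    intro x hx j
    rw [(hz x hx).iteratedDeriv_eq j]
    simp
  refine ⟨?_, ?_⟩
  · rw [contDiff_iff_contDiffAt]
    intro x
    by_cases hx : m ≤ |x| ∧ |x| ≤ 2 * m
    · exact hDB.1.contDiffAt (hS.mem_nhds (by simpa using hmω.trans_le hx.1))
    · exact (contDiffAt_const (c := (0 : ℂ))).congr_of_eventuallyEq (hz x hx)
  · intro j hj x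
    refine ⟨?_, fun h => by_contra fun hx => h (hiz x hx j)⟩
    by_cases hx : m ≤ |x| ∧ |x| ≤ 2 * m
    · have hxS : x ∈ {ω : ℝ | ω₀ < |ω|} := hmω.trans_le hx.1
      have := hDB.2 j hj x hxS
      rw [iteratedFDerivWithin_of_isOpen j hS hxS, norm_iteratedFDeriv_eq_norm_iteratedDeriv] at this
      refine this.trans (le_of_eq ?_)
      ring
    · rw [hiz x hx j, norm_zero]
      positivity

lemma band_l2 {V : ℝ → ℂ} (hV : Continuous V) {m A : ℝ} (hm : 0 < m)
    (hs : ∀ x, V x ≠ 0 → m ≤ |x| ∧ |x| ≤ 2 * m) (hA : ∀ x, ‖V x‖ ≤ A) :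
    Integrable V ∧ MemLp V 2 ∧ ∫ x, ‖V x‖ ^ 2 ≤ 4 * m * A ^ 2 := by
  have hsup : HasCompactSupport V := by
    refine HasCompactSupport.intro (isCompact_Icc (a := -(2 * m)) (b := 2 * m)) ?_
    intro x hx
    by_contra h
    exact hx (abs_le.1 (hs x h).2)
  refine ⟨hV.integrable_of_hasCompactSupport hsup, hV.memLp_of_hasCompactSupport hsup, ?_⟩
  have e : ∫ x, ‖V x‖ ^ 2 = ∫ x in Set.Icc (-(2 * m)) (2 * m), ‖V x‖ ^ 2 := by
    symm
    apply setIntegral_eq_integral_of_forall_compl_eq_zero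
    intro x hx
    have : V x = 0 := by
      by_contra h
      exact hx (abs_le.1 (hs x h).2)
    simp [this]
  rw [e]
  have h2 : ∫ x in Set.Icc (-(2 * m)) (2 * m), ‖V x‖ ^ 2 ≤ ∫ x in Set.Icc (-(2 * m)) (2 * m), A ^ 2 := by
    apply setIntegral_mono
    · exact (by fun_prop : Continuous fun x => ‖V x‖ ^ 2).continuousOn.integrableOn_Icc
    · exact continuous_const.continuousOn.integrableOn_Icc
    · intro x
      exact pow_le_pow_left₀ (norm_nonneg _) (hA x) 2
  refine h2.trans (le_of_eq ?_)
  rw [setIntegral_const, measureReal_def, Real.volume_Icc, ENNReal.toReal_ofReal (by linarith),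
    smul_eq_mul]
  ring


lemma exists_bump : ∃ b : ℝ → ℝ, ContDiff ℝ (⊤ : ℕ∞) b ∧ (∀ u, b (-u) = b u) ∧ (∀ u, 0 ≤ b u) ∧
    (∀ u, 5 / 4 ≤ u → u ≤ 7 / 4 → 1 ≤ b u) ∧ (∀ u, b u ≠ 0 → 1 ≤ |u| ∧ |u| ≤ 2) := by
  let c : ContDiffBump (3 / 2 : ℝ) := ⟨1 / 4, 1 / 2, by norm_num, by norm_num⟩
  refine ⟨fun u => c u + c (-u), ?_, ?_, ?_, ?_, ?_⟩
  · exact c.contDiff.add (c.contDiff.comp contDiff_neg)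
  · intro u; simp only [neg_neg]; ring
  · intro u; exact add_nonneg c.nonneg c.nonneg
  · intro u h1 h2
    have : c u = 1 := c.one_of_mem_closedBall (by
      rw [Metric.mem_closedBall, Real.dist_eq, abs_le]; constructor <;> simp only [c] <;> linarith)
    have h3 : 0 ≤ c (-u) := c.nonneg
    simp only [this]; linarith
  · intro u hu
    have key : ∀ x : ℝ, c x ≠ 0 → 1 ≤ x ∧ x ≤ 2 := by
      intro x hx
      have : x ∈ Function.support c := hx
      rw [c.support_eq, Metric.mem_ball, Real.dist_eq, abs_lt] at this
      simp only [c] at this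
      constructor <;> linarith [this.1, this.2]
    by_cases h : c u = 0
    · have h2 : c (-u) ≠ 0 := by intro h2; simp [h, h2] at hu
      have := key _ h2
      rw [abs_of_nonpos (by linarith)]; exact this
    · have := key _ h
      rw [abs_of_nonneg (by linarith)]; exact this

lemma ft_neg (φ : ℝ → ℝ) (ω : ℝ) : ft φ (-ω) = (starRingEnd ℂ) (ft φ ω) := by
  unfold ft
  rw [← integral_conj]
  congr 1
  ext x
  rw [map_mul, ← Complex.exp_conj]
  simp

lemma phase_mul {φ ρ : ℝ → ℝ} {ω : ℝ} (h : ρ ω = (ft φ ω).arg) :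
    Complex.exp ((ρ ω : ℂ) * Complex.I) * ft φ (-ω) = (‖ft φ ω‖ : ℂ) := by
  rw [ft_neg, h]
  conv_lhs => rw [← Complex.norm_mul_exp_arg_mul_I (ft φ ω)]
  rw [map_mul, ← Complex.exp_conj]
  have e : Complex.exp ((ft φ ω).arg * Complex.I) * Complex.exp ((starRingEnd ℂ) ((ft φ ω).arg * Complex.I)) = 1 := by
    rw [← Complex.exp_add]; simp
  rw [Complex.norm_mul_exp_arg_mul_I]
  calc _ = (starRingEnd ℂ) (‖ft φ ω‖ : ℂ) * (Complex.exp ((ft φ ω).arg * Complex.I) * Complex.exp ((starRingEnd ℂ) ((ft φ ω).arg * Complex.I))) := by ring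
    _ = _ := by rw [e]; simp

lemma phase_neg {φ ρ : ℝ → ℝ} {ω : ℝ} (h : ρ ω = (ft φ ω).arg) (h' : ρ (-ω) = (ft φ (-ω)).arg)
    (hne : ft φ ω ≠ 0) :
    Complex.exp ((ρ (-ω) : ℂ) * Complex.I) = (starRingEnd ℂ) (Complex.exp ((ρ ω : ℂ) * Complex.I)) := by
  have e1 := phase_mul h
  have e2 := phase_mul h'
  rw [neg_neg] at e2
  rw [ft_neg] at e1 e2
  have e3 := congrArg (starRingEnd ℂ) e1
  rw [map_mul, Complex.conj_conj] at e3
  rw [Complex.norm_conj] at e2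
  rw [Complex.conj_ofReal] at e3
  exact mul_right_cancel₀ hne (e2.trans e3.symm)

lemma mom {W : ℝ → ℂ} {v : ℕ} (hW : ContDiff ℝ v W) {m A : ℝ} (hm : 0 < m)
    (hb : ∀ j ≤ v, ∀ x, ‖iteratedDeriv j W x‖ ≤ A)
    (hs : ∀ j ≤ v, ∀ x, iteratedDeriv j W x ≠ 0 → m ≤ |x| ∧ |x| ≤ 2 * m)
    {k : ℝ → ℝ} (hk : ∀ x, ift W x = (k x : ℂ)) :
    Integrable W ∧ Continuous k ∧ MemLp k 2 ∧ Integrable (fun x => (k x) ^ 2 * (1 + (|x| ^ v) ^ 2)) ∧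
      ∫ x, (k x) ^ 2 * (1 + (|x| ^ v) ^ 2) ≤ 2 * m * A ^ 2 ∧ ∫ x, (k x) ^ 2 ≤ 2 * m * A ^ 2 := by
  have hp := Real.pi_gt_three
  have hb0 := hb 0 (Nat.zero_le _)
  have hs0 := hs 0 (Nat.zero_le _)
  rw [iteratedDeriv_zero] at hb0 hs0
  obtain ⟨i0, l0, n0⟩ := band_l2 hW.continuous hm hs0 hb0
  obtain ⟨i1, l1, n1⟩ := band_l2 (hW.continuous_iteratedDeriv v le_rfl) hm (hs v le_rfl) (hb v le_rfl)
  obtain ⟨q0, r0⟩ := ift_l2 i0 l0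
  obtain ⟨q1, r1⟩ := ift_l2 i1 l1
  have hsup : HasCompactSupport W := by
    refine HasCompactSupport.intro (isCompact_Icc (a := -(2 * m)) (b := 2 * m)) ?_
    intro x hx
    by_contra h
    exact hx (abs_le.1 (hs0 x h).2)
  have hkr : ∀ x, k x = (ift W x).re := fun x => by rw [hk]; simp
  have hkc : Continuous k := by
    have : k = fun x => (ift W x).re := funext hkr
    rw [this]; exact Complex.continuous_re.comp (ift_continuous i0)
  have e0 : ∀ x, ‖ift W x‖ ^ 2 = (k x) ^ 2 := by
    intro x; rw [hk]; simp
  have e1 : ∀ x, ‖ift (iteratedDeriv v W) x‖ ^ 2 = (k x) ^ 2 * (|x| ^ v) ^ 2 := by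
    intro x; rw [ift_iter hW hsup, mul_pow, e0]; ring
  have s0 : Integrable (fun x => (k x) ^ 2) := by
    have := (memLp_two_iff_integrable_sq_norm (ift_continuous i0).aestronglyMeasurable).1 q0
    simpa only [e0] using this
  have s1 : Integrable (fun x => (k x) ^ 2 * (|x| ^ v) ^ 2) := by
    have := (memLp_two_iff_integrable_sq_norm (ift_continuous i1).aestronglyMeasurable).1 q1
    simpa only [e1] using this
  simp only [e0] at r0
  simp only [e1] at r1
  have hc : (1 / (2 * Real.pi)) ≤ 1 / 4 := by
    apply one_div_le_one_div_of_le <;> linarith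
  have hA : 0 ≤ m * A ^ 2 := by positivity
  have hpp : 0 ≤ 1 / (2 * Real.pi) := by positivity
  have t0 : ∫ x, (k x) ^ 2 ≤ m * A ^ 2 := by
    rw [r0]; nlinarith [mul_le_mul_of_nonneg_left n0 hpp]
  have t1 : ∫ x, (k x) ^ 2 * (|x| ^ v) ^ 2 ≤ m * A ^ 2 := by
    rw [r1]; nlinarith [mul_le_mul_of_nonneg_left n1 hpp]
  have ee : (fun x => (k x) ^ 2 * (1 + (|x| ^ v) ^ 2)) = fun x => (k x) ^ 2 + (k x) ^ 2 * (|x| ^ v) ^ 2 := by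
    ext x; ring
  refine ⟨i0, hkc, ?_, ?_, ?_, by linarith⟩
  · rw [memLp_two_iff_integrable_sq hkc.aestronglyMeasurable]; exact s0
  · rw [ee]; exact s0.add s1
  · rw [ee, integral_add s0 s1]; linarith

lemma l1_of_mom {k : ℝ → ℝ} (hkc : Continuous k) {m A : ℝ} (hm : 0 < m)
    (hi : Integrable (fun x => (k x) ^ 2 * (1 + (|x| ^ 1) ^ 2)))
    (hb : ∫ x, (k x) ^ 2 * (1 + (|x| ^ 1) ^ 2) ≤ 2 * m * A ^ 2) :
    Integrable k ∧ ∫ x, |k x| ≤ (2 + A ^ 2) * √m := by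
  have hsm : 0 < √m := Real.sqrt_pos.2 hm
  have hsq : √m * √m = m := Real.mul_self_sqrt hm.le
  have hpt : ∀ x, |k x| ≤ (1 / 2 * √m) * (1 + x ^ 2)⁻¹ + (1 / (2 * √m)) * ((k x) ^ 2 * (1 + (|x| ^ 1) ^ 2)) := by
    intro x
    rw [pow_one, sq_abs, ← sq_abs (k x)]
    have h1 : 0 < 1 + x ^ 2 := by positivity
    have : 0 ≤ (√m - |k x| * (1 + x ^ 2)) ^ 2 / (2 * √m * (1 + x ^ 2)) := by positivity
    have e : (√m - |k x| * (1 + x ^ 2)) ^ 2 / (2 * √m * (1 + x ^ 2)) =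
      (1 / 2 * √m) * (1 + x ^ 2)⁻¹ + (1 / (2 * √m)) * (|k x| ^ 2 * (1 + x ^ 2)) - |k x| := by
      field_simp
      ring
    linarith
  have hI := (integrable_inv_one_add_sq.const_mul (1 / 2 * √m)).add (hi.const_mul (1 / (2 * √m)))
  have hki : Integrable k := hI.mono' hkc.aestronglyMeasurable (Filter.Eventually.of_forall hpt)
  refine ⟨hki, ?_⟩
  refine (integral_mono hki.abs hI hpt).trans ?_
  simp only [Pi.add_apply]
  rw [integral_add (integrable_inv_one_add_sq.const_mul (1 / 2 * √m)) (hi.const_mul (1 / (2 * √m))),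
    integral_const_mul, integral_const_mul, integral_univ_inv_one_add_sq]
  have h2 : (1 / (2 * √m)) * ∫ x, (k x) ^ 2 * (1 + (|x| ^ 1) ^ 2) ≤ (1 / (2 * √m)) * (2 * (√m * √m) * A ^ 2) := by
    rw [hsq]; gcongr
  have e : (1 / (2 * √m)) * (2 * (√m * √m) * A ^ 2) = A ^ 2 * √m := by field_simp
  rw [e] at h2
  nlinarith [Real.pi_le_four]


lemma band_rpow_up {ω m α : ℝ} (hm : 1 ≤ m) (hα : 0 ≤ α) (h : m ≤ |ω|) :
    (ω ^ 2 + 1) ^ (-(α / 2)) ≤ m ^ (-α) := by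
  have hm0 : 0 < m := by linarith
  have e : m ^ (-α) = (m ^ 2) ^ (-(α / 2)) := by
    rw [← Real.rpow_natCast, ← Real.rpow_mul hm0.le]; congr 1; push_cast; ring
  rw [e]
  apply Real.rpow_le_rpow_of_nonpos (by positivity)
  · have : m ^ 2 ≤ |ω| ^ 2 := by gcongr
    rw [sq_abs] at this; linarith
  · linarith

lemma construct (g φ : ℝ → ℝ) (hg_int : Integrable g)
    (v : ℕ) (hv : 1 ≤ v) (Cg2 : ℝ)
    (hg_smooth : ContDiff ℝ v (ft g))
    (hg_derivs : ∀ l : ℕ, 1 ≤ l → l ≤ v →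
      ∀ ω : ℝ, ‖iteratedDeriv l (ft g) ω‖ ≤ Cg2 * ‖ft g ω‖)
    (ω₀ ρbar : ℝ) (hω₀ : 0 < ω₀)
    (ρ : ℝ → ℝ)
    (hρ_arg : ∀ ω : ℝ, ω₀ ≤ |ω| → ρ ω = (ft φ ω).arg)
    (hρ_smooth : ContDiffOn ℝ v ρ {ω : ℝ | ω₀ ≤ |ω|})
    (hρbdd : ∀ j : ℕ, j ≤ v → ∀ ω : ℝ, ω₀ ≤ |ω| →
      |iteratedDerivWithin j ρ {ω' : ℝ | ω₀ ≤ |ω'|} ω| ≤ ρbar)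
    (Cg3 α : ℝ) (hCg3 : 0 < Cg3) (hα : 0 ≤ α)
    (hgup : ∀ ω : ℝ, ‖ft g ω‖ ≤ Cg3 * (ω ^ 2 + 1) ^ (-(α / 2)))
    (hφne : ∀ ω, ft φ ω ≠ 0) {κ : ℝ} (hκ : 0 < κ)
    {b : ℝ → ℝ} (hbs : ContDiff ℝ (⊤ : ℕ∞) b) (hbe : ∀ u, b (-u) = b u)
    (hbb : ∀ u, b u ≠ 0 → 1 ≤ |u| ∧ |u| ≤ 2) :
    ∃ A : ℝ, 1 ≤ A ∧ ∀ m : ℝ, 1 ≤ m → ω₀ < m → ∃ k : ℝ → ℝ, Integrable k ∧ MemLp k 2 ∧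
      ∫ x, k x = 0 ∧ ∫ x, |k x| ≤ A * √m ∧ ∫ x, (k x) ^ 2 ≤ A * m ∧
      Integrable (fun y => (∫ θ, g (y - θ) * ∫ η, gs (κ / m ^ 2) (θ - η) * k η) ^ 2 * (1 + (|y| ^ v) ^ 2)) ∧
      ∫ y, (∫ θ, g (y - θ) * ∫ η, gs (κ / m ^ 2) (θ - η) * k η) ^ 2 * (1 + (|y| ^ v) ^ 2)
        ≤ A * (m * (m ^ (-α)) ^ 2) ∧
      ∀ ω, ft k ω * (Real.exp (-(κ / m ^ 2) * ω ^ 2) : ℂ) * ft φ (-ω) =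
        ((b (m⁻¹ * ω) * Real.exp (-κ * (m⁻¹ * ω) ^ 2) * ‖ft φ ω‖ : ℝ) : ℂ) := by
  set bH : ℝ → ℝ := fun u => b u * Real.exp (-κ * u ^ 2) with hbH
  have hbHs : ContDiff ℝ (⊤ : ℕ∞) bH := hbs.mul (by fun_prop)
  have hbHb : ∀ u, bH u ≠ 0 → 1 ≤ |u| ∧ |u| ≤ 2 := fun u hu => hbb u (left_ne_zero_of_mul hu)
  obtain ⟨C1, hC1, hU⟩ := lemmaD hρ_smooth hρbdd hbs hbb (G := fun _ => (1 : ℂ)) contDiff_const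
    (K := 1) (by norm_num) (by
      intro j hj x
      rcases Nat.eq_zero_or_pos j with h | h
      · subst h; simp
      · rw [iteratedDeriv_const, if_neg (by omega)]; simp)
  obtain ⟨C2, hC2, hH⟩ := lemmaD hρ_smooth hρbdd hbHs hbHb (G := ft g) hg_smooth
    (K := max 1 Cg2) (by positivity) (by
      intro j hj x
      rcases Nat.eq_zero_or_pos j with h | h
      · subst h; rw [iteratedDeriv_zero]
        exact le_mul_of_one_le_left (norm_nonneg _) (le_max_left _ _)
      · exact (hg_derivs j h hj x).trans (by gcongr; exact le_max_right _ _))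
  refine ⟨2 + 2 * C1 ^ 2 + 2 * (C2 * Cg3) ^ 2, by nlinarith [sq_nonneg C1, sq_nonneg (C2 * Cg3)], ?_⟩
  intro m hm hmω
  have hm0 : 0 < m := by linarith
  have hcpos : 0 < κ / m ^ 2 := by positivity
  obtain ⟨u1, u2⟩ := hU m hm hmω
  obtain ⟨w1, w2⟩ := hH m hm hmω
  set U : ℝ → ℂ := fun ω => ((b (m⁻¹ * ω) : ℝ) : ℂ) * Complex.exp ((ρ ω : ℂ) * Complex.I) * 1 with hUdef
  set W : ℝ → ℂ := fun ω => ((bH (m⁻¹ * ω) : ℝ) : ℂ) * Complex.exp ((ρ ω : ℂ) * Complex.I) * ft g ω with hWdef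
  have hband : ∀ ω, b (m⁻¹ * ω) ≠ 0 → ω₀ ≤ |ω| := by
    intro ω h
    have := (hbb _ h).1
    rw [abs_mul, abs_inv, abs_of_pos hm0, inv_mul_eq_div, le_div_iff₀ hm0] at this
    linarith
  have hUconj : ∀ ω, U (-ω) = (starRingEnd ℂ) (U ω) := by
    intro ω
    simp only [hUdef, mul_one, mul_neg, hbe, map_mul, Complex.conj_ofReal]
    by_cases h : b (m⁻¹ * ω) = 0
    · simp [h]
    · have h1 := hband ω h
      rw [phase_neg (hρ_arg ω h1) (hρ_arg (-ω) (by rwa [abs_neg])) (hφne ω)]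
  set k : ℝ → ℝ := fun x => (ift U x).re
  have hk : ∀ x, ift U x = (k x : ℂ) := ift_real hUconj
  obtain ⟨iU, kc, kL2, km, kmb, k2⟩ := mom (v := 1) (A := C1) (u1.of_le (by exact_mod_cast hv)) hm0
    (fun j hj x => by simpa using (u2 j (hj.trans hv) x).1)
    (fun j hj x => (u2 j (hj.trans hv) x).2) hk
  obtain ⟨ki, k1⟩ := l1_of_mom kc hm0 km kmb
  have hftk : ft k = U := ft_ift u1.continuous iU hk ki
  have hUz : U 0 = 0 := by
    have : b (m⁻¹ * 0) = 0 := by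
      by_contra h
      have := (hbb _ h).1
      simp at this; linarith
    simp only [hUdef, this]; simp
  have hexp : ∀ ω : ℝ, Real.exp (-(κ / m ^ 2) * ω ^ 2) = Real.exp (-κ * (m⁻¹ * ω) ^ 2) := by
    intro ω; congr 1; field_simp
  -- h
  have hh : ∀ y, ift (fun ω => U ω * ft (gs (κ / m ^ 2)) ω) y =
      ((∫ θ, gs (κ / m ^ 2) (y - θ) * k θ : ℝ) : ℂ) := conv_ift iU hk (gs_integrable hcpos)
  have hiH : Integrable (fun ω => U ω * ft (gs (κ / m ^ 2)) ω) := by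
    refine iU.mul_bdd (c := ∫ x, |gs (κ / m ^ 2) x|) (ft_continuous (gs_integrable hcpos)).aestronglyMeasurable ?_
    exact Filter.Eventually.of_forall fun ω => ft_norm_le _ _
  have hZ := conv_ift hiH hh hg_int
  have eW : (fun ω => U ω * ft (gs (κ / m ^ 2)) ω * ft g ω) = W := by
    ext ω
    simp only [hUdef, hWdef, hbH, gs_ft hcpos, hexp]
    push_cast; ring
  rw [eW] at hZ
  have hWA : ∀ j ≤ v, ∀ x, ‖iteratedDeriv j W x‖ ≤ C2 * Cg3 * m ^ (-α) := by
    intro j hj x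
    by_cases h : iteratedDeriv j W x = 0
    · rw [h, norm_zero]; positivity
    · have hx := ((w2 j hj x).2 h).1
      refine (w2 j hj x).1.trans ?_
      rw [mul_assoc]
      gcongr
      refine (hgup x).trans ?_
      gcongr
      exact band_rpow_up hm hα hx
  obtain ⟨-, -, -, z1, z2, -⟩ := mom w1 hm0 hWA (fun j hj x => (w2 j hj x).2) hZ
  have p1 := sq_nonneg C1
  have p2 := sq_nonneg (C2 * Cg3)
  have hsm := Real.sqrt_nonneg m
  refine ⟨k, ki, kL2, ?_, ?_, ?_, z1, z2.trans ?_, ?_⟩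
  · have := ft_zero k
    rw [hftk, hUz] at this
    exact_mod_cast this.symm
  · refine k1.trans ?_
    refine mul_le_mul_of_nonneg_right ?_ hsm
    nlinarith
  · refine k2.trans ?_
    nlinarith [mul_nonneg hm0.le p2]
  · have : 0 ≤ m * (m ^ (-α)) ^ 2 := by positivity
    have e : 2 * m * (C2 * Cg3 * m ^ (-α)) ^ 2 = (2 * (C2 * Cg3) ^ 2) * (m * (m ^ (-α)) ^ 2) := by ring
    rw [e]
    gcongr
    nlinarith
  · intro ω
    rw [hftk, hexp]
    simp only [hUdef]
    by_cases h : b (m⁻¹ * ω) = 0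
    · simp [h]
    · have := phase_mul (hρ_arg ω (hband ω h))
      push_cast
      rw [← this]
      ring


lemma band_rpow_low {ω m a : ℝ} (hm : 1 ≤ m) (h : m ≤ ω) (h2 : ω ≤ 2 * m) :
    (5 : ℝ) ^ (-(|a| / 2)) * m ^ (-a) ≤ (ω ^ 2 + 1) ^ (-(a / 2)) := by
  have hm0 : 0 < m := by linarith
  have e : m ^ (-a) = (m ^ 2) ^ (-(a / 2)) := by
    rw [← Real.rpow_natCast, ← Real.rpow_mul hm0.le]; congr 1; push_cast; ring
  set t := (ω ^ 2 + 1) / m ^ 2 with ht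
  have ht1 : 1 ≤ t := by rw [ht, le_div_iff₀ (by positivity)]; nlinarith
  have ht2 : t ≤ 5 := by rw [ht, div_le_iff₀ (by positivity)]; nlinarith
  have et : ω ^ 2 + 1 = t * m ^ 2 := by rw [ht]; field_simp
  rw [et, Real.mul_rpow (by linarith) (by positivity), e]
  gcongr
  calc (5 : ℝ) ^ (-(|a| / 2)) ≤ t ^ (-(|a| / 2)) :=
        Real.rpow_le_rpow_of_nonpos (by linarith) ht2 (by linarith [abs_nonneg a])
    _ ≤ t ^ (-(a / 2)) := Real.rpow_le_rpow_of_exponent_le ht1 (by linarith [le_abs_self a])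

lemma gap_lower {b : ℝ → ℝ} (hb0 : ∀ u, 0 ≤ b u) (hb1 : ∀ u, 5 / 4 ≤ u → u ≤ 7 / 4 → 1 ≤ b u)
    {φ : ℝ → ℝ} {Cφ1 a κ m : ℝ} (hC : 0 < Cφ1) (hm : 1 ≤ m) (hκ : 0 < κ)
    (hφlow : ∀ ω : ℝ, Cφ1 * (ω ^ 2 + 1) ^ (-(a / 2)) ≤ ‖ft φ ω‖)
    (hi : Integrable (fun ω => b (m⁻¹ * ω) * Real.exp (-κ * (m⁻¹ * ω) ^ 2) * ‖ft φ ω‖)) :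
    (Real.exp (-κ * 4) * (Cφ1 * 5 ^ (-(|a| / 2))) / 2) * (m * m ^ (-a)) ≤
      ∫ ω, b (m⁻¹ * ω) * Real.exp (-κ * (m⁻¹ * ω) ^ 2) * ‖ft φ ω‖ := by
  have hm0 : 0 < m := by linarith
  set F := fun ω => b (m⁻¹ * ω) * Real.exp (-κ * (m⁻¹ * ω) ^ 2) * ‖ft φ ω‖
  have hF0 : ∀ ω, 0 ≤ F ω := fun ω => mul_nonneg (mul_nonneg (hb0 _) (Real.exp_pos _).le) (norm_nonneg _)
  have h1 : ∫ ω in Set.Icc (m * (5 / 4)) (m * (7 / 4)), F ω ≤ ∫ ω, F ω :=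
    setIntegral_le_integral hi (Filter.Eventually.of_forall hF0)
  have h2 : ∫ ω in Set.Icc (m * (5 / 4)) (m * (7 / 4)),
      (Real.exp (-κ * 4) * (Cφ1 * (5 ^ (-(|a| / 2)) * m ^ (-a)))) ≤
      ∫ ω in Set.Icc (m * (5 / 4)) (m * (7 / 4)), F ω := by
    apply setIntegral_mono_on
    · exact continuous_const.continuousOn.integrableOn_Icc
    · exact hi.integrableOn
    · exact measurableSet_Icc
    · intro ω hω
      have hu1 : 5 / 4 ≤ m⁻¹ * ω := by rw [inv_mul_eq_div, le_div_iff₀ hm0]; linarith [hω.1]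
      have hu2 : m⁻¹ * ω ≤ 7 / 4 := by rw [inv_mul_eq_div, div_le_iff₀ hm0]; linarith [hω.2]
      have q1 := hb1 _ hu1 hu2
      have q2 : Real.exp (-κ * 4) ≤ Real.exp (-κ * (m⁻¹ * ω) ^ 2) := by
        apply Real.exp_le_exp.2
        have : (m⁻¹ * ω) ^ 2 ≤ 4 := by nlinarith
        nlinarith
      have q3 : Cφ1 * (5 ^ (-(|a| / 2)) * m ^ (-a)) ≤ ‖ft φ ω‖ := by
        refine le_trans ?_ (hφlow ω)
        gcongr
        exact band_rpow_low hm (by linarith [hω.1]) (by linarith [hω.2])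
      have q4 : Real.exp (-κ * 4) ≤ b (m⁻¹ * ω) * Real.exp (-κ * (m⁻¹ * ω) ^ 2) := by
        refine q2.trans (le_mul_of_one_le_left (Real.exp_pos _).le q1)
      exact mul_le_mul q4 q3 (by positivity) (mul_nonneg (hb0 _) (Real.exp_pos _).le)
  refine le_trans (le_of_eq ?_) (h2.trans h1)
  rw [setIntegral_const, measureReal_def, Real.volume_Icc, ENNReal.toReal_ofReal (by linarith),
    smul_eq_mul]
  ring

lemma low_poly {g : ℝ → ℝ} {Cg1 vs : ℝ} (hCg1 : 0 < Cg1)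
    (hglow : ∀ θ : ℝ, Cg1 * (θ ^ 2 + 1) ^ (-vs) ≤ g θ) {v : ℕ} (hv : vs ≤ v) (y : ℝ) :
    Cg1 ≤ g y * (2 ^ v * (1 + (|y| ^ v) ^ 2)) := by
  have h1 : (y ^ 2 + 1) ^ v ≤ 2 ^ v * (1 + (|y| ^ v) ^ 2) := by
    have := add_pow_le (sq_nonneg y) zero_le_one v
    have e : (|y| ^ v) ^ 2 = (y ^ 2) ^ v := by rw [← sq_abs y]; ring
    rw [e]
    refine this.trans ?_
    rw [one_pow, add_comm]
    gcongr
    · norm_num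
    · omega
  have h2 : (y ^ 2 + 1) ^ (-(v : ℝ)) ≤ (y ^ 2 + 1) ^ (-vs) :=
    Real.rpow_le_rpow_of_exponent_le (by nlinarith [sq_nonneg y]) (by linarith)
  have hpos : (0 : ℝ) < (y ^ 2 + 1) ^ v := by positivity
  rw [Real.rpow_neg (by positivity), Real.rpow_natCast] at h2
  have h3 : Cg1 * ((y ^ 2 + 1) ^ v)⁻¹ ≤ g y := (mul_le_mul_of_nonneg_left h2 hCg1.le).trans (hglow y)
  calc Cg1 = Cg1 * ((y ^ 2 + 1) ^ v)⁻¹ * (y ^ 2 + 1) ^ v := by field_simp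
    _ ≤ g y * (2 ^ v * (1 + (|y| ^ v) ^ 2)) := by
      apply mul_le_mul h3 h1 hpos.le
      exact le_trans (by positivity) h3

lemma mix_props {g f : ℝ → ℝ} {μ : ℝ} (hμ0 : 0 ≤ μ) (hμ1 : μ ≤ 1 / 2) (hg0 : ∀ x, 0 ≤ g x)
    (hg_int : Integrable g) (hg_one : (∫ x, g x) = 1) (hf0 : ∀ x, 0 ≤ f x) (hf : Integrable f)
    (hf1 : ∫ x, f x = 1) :
    (∀ y, g y / 2 ≤ (1 - μ) * g y + μ * ∫ θ, g (y - θ) * f θ) ∧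
    Integrable (fun y => (1 - μ) * g y + μ * ∫ θ, g (y - θ) * f θ) ∧
    ∫ y, ((1 - μ) * g y + μ * ∫ θ, g (y - θ) * f θ) = 1 := by
  refine ⟨?_, (hg_int.const_mul _).add ((conv_integrand hg_int hf).const_mul _), ?_⟩
  · intro y
    have h1 : 0 ≤ ∫ θ, g (y - θ) * f θ := integral_nonneg fun θ => mul_nonneg (hg0 _) (hf0 _)
    nlinarith [hg0 y, mul_nonneg hμ0 h1]
  · rw [integral_add (hg_int.const_mul _) ((conv_integrand hg_int hf).const_mul _),
      integral_const_mul, integral_const_mul, conv_int hg_int hf, hg_one, hf1]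
    ring

lemma bdd_conv_integrable {g f : ℝ → ℝ} (hg0 : ∀ x, 0 ≤ g x)
    (hg_int : Integrable g) (hg_bdd : BddAbove (Set.range g)) (hf : Integrable f) (y : ℝ) :
    Integrable (fun θ => g (y - θ) * f θ) := by
  obtain ⟨M, hM⟩ := hg_bdd
  refine hf.bdd_mul (c := M) ?_ (Filter.Eventually.of_forall fun θ => ?_)
  · exact (hg_int.comp_sub_left y).aestronglyMeasurable
  · rw [Real.norm_of_nonneg (hg0 _)]
    exact hM ⟨_, rfl⟩


lemma cand_diff {lam c δ : ℝ} {k : ℝ → ℝ} (hk : Integrable k) (hk0 : ∫ x, k x = 0)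
    (hbd : ∀ x, Integrable (fun θ => gs c (x - θ) * k θ))
    (hbd' : ∀ x, Integrable (fun θ => gs c (x - θ) * |k θ|)) (x : ℝ) :
    cand lam c δ (fun x => |k x| + k x) x =
      cand lam c δ (fun x => |k x|) x + δ * ∫ θ, gs c (x - θ) * k θ := by
  unfold cand
  rw [integral_add hk.abs hk, hk0, add_zero]
  have : ∫ θ, gs c (x - θ) * (|k θ| + k θ) =
      (∫ θ, gs c (x - θ) * |k θ|) + ∫ θ, gs c (x - θ) * k θ := by
    rw [← integral_add (hbd' x) (hbd x)]
    congr 1; ext θ; ring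
  rw [this]; ring

lemma gs_bdd {c : ℝ} (hc : 0 < c) : BddAbove (Set.range (gs c)) := by
  refine ⟨(√(4 * Real.pi * c))⁻¹, ?_⟩
  rintro _ ⟨x, rfl⟩
  unfold gs
  have : Real.exp (-(1 / (4 * c)) * x ^ 2) ≤ 1 := by
    rw [Real.exp_le_one_iff]
    have : 0 ≤ 1 / (4 * c) * x ^ 2 := by positivity
    linarith
  exact mul_le_of_le_one_right (by positivity) this

/-- Two-point bound for a fixed perturbation. -/
lemma two_point (g φ : ℝ → ℝ) (hg0 : ∀ x, 0 ≤ g x) (hg_int : Integrable g)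
    (hg_one : (∫ x, g x) = 1) (hg_bdd : BddAbove (Set.range g)) (hφ : Integrable φ)
    {Cg1 : ℝ} (hCg1 : 0 < Cg1) {v : ℕ} (hlow : ∀ y, Cg1 ≤ g y * (2 ^ v * (1 + (|y| ^ v) ^ 2)))
    {s B lam κ m δ A : ℝ} (hs : 0 ≤ s) (hl : s / 2 < lam) (hκ : s / 2 ≤ κ) (hκ0 : 0 < κ) (hm : 1 ≤ m)
    (hδ : 0 ≤ δ) {k : ℝ → ℝ} (hk : Integrable k) (hk2 : MemLp k 2) (hk0 : ∫ x, k x = 0)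
    (hk1 : δ * ∫ x, |k x| ≤ 1) (hkA : ∫ x, (k x) ^ 2 ≤ A)
    (hB : 2 * √(Real.pi / (2 * lam - s)) + 4 * Real.pi * (δ ^ 2 * m ^ (2 * s)) * (4 * A) ≤ B ^ 2)
    (hZi : Integrable (fun y => (∫ θ, g (y - θ) * ∫ η, gs (κ / m ^ 2) (θ - η) * k η) ^ 2 * (1 + (|y| ^ v) ^ 2)))
    {n : ℕ} (hn : 0 < n) {μ : ℝ} (hμ0 : 0 ≤ μ) (hμ1 : μ ≤ 1 / 2)
    (hE : (μ * δ) ^ 2 * (2 ^ (v + 1) / Cg1) *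
      (∫ y, (∫ θ, g (y - θ) * ∫ η, gs (κ / m ^ 2) (θ - η) * k η) ^ 2 * (1 + (|y| ^ v) ^ 2)) ≤ 1 / n)
    {F : ℝ → ℝ} (hF : ∀ ω, ft k ω * (Real.exp (-(κ / m ^ 2) * ω ^ 2) : ℂ) * ft φ (-ω) = (F ω : ℂ))
    {D : ℝ} (hD0 : 0 ≤ D)
    (hD : Integrable F → 4 * D ≤ δ / (2 * Real.pi) * ∫ ω, F ω)
    (T : (Fin n → ℝ) → ℂ) (hT : Measurable T) :
    ∃ f₀ : ℝ → ℝ, (∀ x, 0 ≤ f₀ x) ∧ Integrable f₀ ∧ (∫ x, f₀ x) = 1 ∧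
      (∫ ω : ℝ, ‖ft f₀ ω‖ ^ 2 * (ω ^ 2 + 1) ^ s) ≤ B ^ 2 ∧
      Integrable (fun ω : ℝ => ‖ft f₀ ω‖ * ‖ft φ ω‖) ∧
      ENNReal.ofReal (D ^ 2) ≤
        ∫⁻ y : Fin n → ℝ,
          ENNReal.ofReal
            (‖T y - (1 / (2 * Real.pi) : ℂ) * ∫ ω : ℝ, ft f₀ ω * ft φ (-ω)‖ ^ 2 *
              ∏ i : Fin n, ((1 - μ) * g (y i) + μ * ∫ θ : ℝ, g (y i - θ) * f₀ θ)) := by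
  have hm0 : 0 < m := by linarith
  have hl0 : 0 < lam := by linarith
  have hc : 0 < κ / m ^ 2 := by positivity
  set c := κ / m ^ 2 with hcdef
  set r0 : ℝ → ℝ := fun x => |k x| with hr0
  set r1 : ℝ → ℝ := fun x => |k x| + k x with hr1
  have i0 : Integrable r0 := hk.abs
  have i1 : Integrable r1 := hk.abs.add hk
  have n0 : ∀ x, 0 ≤ r0 x := fun x => abs_nonneg _
  have n1 : ∀ x, 0 ≤ r1 x := fun x => by simp only [hr1]; linarith [neg_abs_le (k x)]
  have I1 : ∫ x, r1 x = ∫ x, |k x| := by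
    simp only [hr1]; rw [integral_add hk.abs hk, hk0, add_zero]
  have d0 : δ * ∫ x, r0 x ≤ 1 := hk1
  have d1 : δ * ∫ x, r1 x ≤ 1 := by rw [I1]; exact hk1
  have L0 : MemLp r0 2 := hk2.abs
  have L1 : MemLp r1 2 := hk2.abs.add hk2
  have ksq : Integrable (fun x => (k x) ^ 2) := hk2.integrable_sq
  have hA0 : 0 ≤ A := le_trans (integral_nonneg fun x => sq_nonneg _) hkA
  have S0 : ∫ x, (r0 x) ^ 2 ≤ 4 * A := by
    simp only [hr0, sq_abs]; linarith
  have S1 : ∫ x, (r1 x) ^ 2 ≤ 4 * A := by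
    have : ∫ x, (r1 x) ^ 2 ≤ ∫ x, 4 * (k x) ^ 2 := by
      apply integral_mono L1.integrable_sq (ksq.const_mul 4)
      intro x
      simp only [hr1]
      nlinarith [sq_nonneg (|k x| - k x), sq_abs (k x)]
    rw [integral_const_mul] at this
    linarith
  have sob : ∀ r : ℝ → ℝ, Integrable r → (∀ x, 0 ≤ r x) → δ * ∫ x, r x ≤ 1 → MemLp r 2 →
      ∫ x, (r x) ^ 2 ≤ 4 * A →
      (∫ ω : ℝ, ‖ft (cand lam c δ r) ω‖ ^ 2 * (ω ^ 2 + 1) ^ s) ≤ B ^ 2 := by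
    intro r a1 a2 a3 a4 a5
    refine (cand_sobolev hl hs hκ hκ0 hm hδ a2 a3 a1 a4).trans (le_trans ?_ hB)
    gcongr
  set f0 := cand lam c δ r0 with hf0
  set f1 := cand lam c δ r1 with hf1
  have f0i : Integrable f0 := cand_integrable hl0 hc i0
  have f1i : Integrable f1 := cand_integrable hl0 hc i1
  have f0n := cand_nonneg (lam := lam) (c := c) hδ n0 d0
  have f1n := cand_nonneg (lam := lam) (c := c) hδ n1 d1
  have f0o : ∫ x, f0 x = 1 := cand_one hl0 hc i0
  have f1o : ∫ x, f1 x = 1 := cand_one hl0 hc i1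
  have w0 := cand_ft_integrable (δ := δ) hl0 hc i0 hφ
  have w1 := cand_ft_integrable (δ := δ) hl0 hc i1 hφ
  set h : ℝ → ℝ := fun x => ∫ η, gs c (x - η) * k η with hh
  have hhi : Integrable h := conv_integrand (gs_integrable hc) hk
  have fd : ∀ x, f1 x = f0 x + δ * h x := cand_diff hk hk0
    (bdd_conv_integrable (gs_nonneg c) (gs_integrable hc) (gs_bdd hc) hk)
    (bdd_conv_integrable (gs_nonneg c) (gs_integrable hc) (gs_bdd hc) hk.abs)
  set Z : ℝ → ℝ := fun y => ∫ θ, g (y - θ) * h θ with hZ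
  have cd : ∀ y, ∫ θ, g (y - θ) * f1 θ = (∫ θ, g (y - θ) * f0 θ) + δ * Z y := by
    intro y
    rw [hZ, ← integral_const_mul, ← integral_add (bdd_conv_integrable hg0 hg_int hg_bdd f0i y)
      ((bdd_conv_integrable hg0 hg_int hg_bdd hhi y).const_mul δ)]
    congr 1; ext θ; rw [fd]; ring
  obtain ⟨p1, p2, p3⟩ := mix_props hμ0 hμ1 hg0 hg_int hg_one f0n f0i f0o
  obtain ⟨q1, q2, q3⟩ := mix_props hμ0 hμ1 hg0 hg_int hg_one f1n f1i f1o
  have gpos : ∀ y, 0 < g y := by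
    intro y
    have h1 := hlow y
    have h2 : (0 : ℝ) < 2 ^ v * (1 + (|y| ^ v) ^ 2) := by positivity
    by_contra h3
    have : g y = 0 := le_antisymm (not_lt.1 h3) (hg0 y)
    rw [this] at h1; linarith
  -- functional gap
  have ftd : ∀ ω, ft f1 ω * ft φ (-ω) - ft f0 ω * ft φ (-ω) = ((δ * F ω : ℝ) : ℂ) := by
    intro ω
    have e1 : ft r1 ω = ft r0 ω + ft k ω := by
      have := ft_add hk.abs hk 1 1 ω
      simpa [hr1, hr0] using this
    have I1' : ∫ x, r1 x = ∫ x, r0 x := I1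
    rw [hf1, hf0, cand_ft hl0 hc i1, cand_ft hl0 hc i0, e1, I1']
    push_cast
    rw [← hF ω]
    push_cast
    ring
  have prodI : ∀ f : ℝ → ℝ, Integrable f → Integrable (fun ω : ℝ => ‖ft f ω‖ * ‖ft φ ω‖) →
      Integrable (fun ω => ft f ω * ft φ (-ω)) := by
    intro f hf hw
    refine hw.mono' ?_ (Filter.Eventually.of_forall fun ω => ?_)
    · exact ((ft_continuous hf).mul ((ft_continuous hφ).comp continuous_neg)).aestronglyMeasurable
    · rw [norm_mul, ft_neg, Complex.norm_conj]
  have P0 := prodI f0 f0i w0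
  have P1 := prodI f1 f1i w1
  set z := (1 / (2 * Real.pi) : ℂ) * ∫ ω : ℝ, ft f0 ω * ft φ (-ω)
  set w := (1 / (2 * Real.pi) : ℂ) * ∫ ω : ℝ, ft f1 ω * ft φ (-ω)
  have hp := Real.pi_pos
  have hwz : 4 * D ≤ ‖w - z‖ := by
    rcases hδ.eq_or_lt with h0 | hpos
    · by_cases hFi : Integrable F
      · have := hD hFi
        rw [← h0] at this
        have : D = 0 := by simp at this; linarith
        rw [this]; simp
      · have Fk : Integrable F := by
          have hkf : Integrable (fun ω => (ft k ω * (Real.exp (-c * ω ^ 2) : ℂ)) * ft φ (-ω)) := by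
            have g1 : Integrable (fun ω : ℝ => (Real.exp (-c * ω ^ 2) : ℂ)) :=
              (integrable_exp_neg_mul_sq hc).ofReal
            refine Integrable.mul_bdd (c := ∫ x, |φ x|) ?_ ?_ ?_
            · exact g1.bdd_mul (c := ∫ x, |k x|) (ft_continuous hk).aestronglyMeasurable
                (Filter.Eventually.of_forall fun ω => ft_norm_le _ _)
            · exact ((ft_continuous hφ).comp continuous_neg).aestronglyMeasurable
            · exact Filter.Eventually.of_forall fun ω => ft_norm_le _ _
          have := hkf.re
          refine this.congr (Filter.Eventually.of_forall fun ω => ?_)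
          simp only [hF ω]; simp
        exact absurd Fk hFi
    · have hdi : Integrable (fun ω => ((δ * F ω : ℝ) : ℂ)) := by
        refine (P1.sub P0).congr (Filter.Eventually.of_forall fun ω => ?_)
        exact ftd ω
      have hFi : Integrable F := by
        have h1 : Integrable (fun ω => δ * F ω) := by
          refine hdi.re.congr (Filter.Eventually.of_forall fun ω => ?_)
          simp
        refine (h1.const_mul δ⁻¹).congr (Filter.Eventually.of_forall fun ω => ?_)
        simp only; field_simp
      have e : w - z = ((δ / (2 * Real.pi) * ∫ ω, F ω : ℝ) : ℂ) := by
        simp only [w, z]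
        rw [← mul_sub, ← integral_sub P1 P0]
        simp only [ftd]
        rw [integral_complex_ofReal, integral_const_mul]
        push_cast; ring
      rw [e, Complex.norm_real]
      exact (hD hFi).trans (le_abs_self _)
  have LC := lecam hn (E := fun y => (μ * δ) ^ 2 * (2 ^ (v + 1) / Cg1) * ((Z y) ^ 2 * (1 + (|y| ^ v) ^ 2)))
    (fun y => lt_of_lt_of_le (half_pos (gpos y)) (p1 y))
    (fun y => le_trans (half_pos (gpos y)).le (q1 y)) p2 q2 p3 q3 (hZi.const_mul _) (by
      intro y
      rw [cd y]
      have e1 : ((1 - μ) * g y + μ * (∫ θ, g (y - θ) * f0 θ) -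
        ((1 - μ) * g y + μ * ((∫ θ, g (y - θ) * f0 θ) + δ * Z y))) ^ 2 = (μ * δ) ^ 2 * (Z y) ^ 2 := by ring
      rw [e1]
      have e2 : (μ * δ) ^ 2 * (Z y) ^ 2 ≤ g y / 2 * ((μ * δ) ^ 2 * (2 ^ (v + 1) / Cg1) * ((Z y) ^ 2 * (1 + (|y| ^ v) ^ 2))) := by
        have e3 : g y / 2 * ((μ * δ) ^ 2 * (2 ^ (v + 1) / Cg1) * ((Z y) ^ 2 * (1 + (|y| ^ v) ^ 2))) =
          ((μ * δ) ^ 2 * (Z y) ^ 2) * (g y * (2 ^ v * (1 + (|y| ^ v) ^ 2)) / Cg1) := by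
          field_simp; ring
        rw [e3]
        apply le_mul_of_one_le_right (by positivity)
        rw [le_div_iff₀ hCg1, one_mul]
        exact hlow y
      refine e2.trans ?_
      gcongr
      exact p1 y) (by rw [integral_const_mul]; exact hE) T hT z w D hD0 hwz
  rcases LC with LC | LC
  · exact ⟨f0, f0n, f0i, f0o, sob r0 i0 n0 d0 L0 S0, w0, LC⟩
  · exact ⟨f1, f1n, f1i, f1o, sob r1 i1 n1 d1 L1 S1, w1, LC⟩


lemma core (g φ : ℝ → ℝ) (ν : ℝ) (hν : 1 / 2 < ν) (hν1 : ν < 1)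
    (hg_nonneg : ∀ x, 0 ≤ g x) (hg_int : Integrable g) (hg_one : (∫ x, g x) = 1)
    (hg_bdd : BddAbove (Set.range g))
    (Cg1 vs : ℝ) (hCg1 : 0 < Cg1) (hvs : 1 ≤ vs)
    (hglow : ∀ θ : ℝ, Cg1 * (θ ^ 2 + 1) ^ (-vs) ≤ g θ)
    (v₁ : ℕ) (hv₁ : v₁ = ⌈vs⌉₊)
    (Cg2 : ℝ)
    (hg_smooth : ContDiff ℝ ((v₁ : ℕ) : ℕ∞) (ft g))
    (hg_derivs : ∀ l : ℕ, 1 ≤ l → l ≤ v₁ →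
      ∀ ω : ℝ, ‖iteratedDeriv l (ft g) ω‖ ≤ Cg2 * ‖ft g ω‖)
    (ω₀ ρbar : ℝ) (hω₀ : 0 < ω₀)
    (ρ : ℝ → ℝ)
    (hρ_arg : ∀ ω : ℝ, ω₀ ≤ |ω| → ρ ω = (ft φ ω).arg)
    (hρ_smooth : ContDiffOn ℝ ((v₁ : ℕ) : ℕ∞) ρ {ω : ℝ | ω₀ ≤ |ω|})
    (hρbdd : ∀ j : ℕ, j ≤ v₁ → ∀ ω : ℝ, ω₀ ≤ |ω| →
      |iteratedDerivWithin j ρ {ω' : ℝ | ω₀ ≤ |ω'|} ω| ≤ ρbar)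
    (Cg3 α : ℝ) (hCg3 : 0 < Cg3) (hα : 0 ≤ α)
    (hgup : ∀ ω : ℝ, ‖ft g ω‖ ≤ Cg3 * (ω ^ 2 + 1) ^ (-(α / 2)))
    (Cφ1 a : ℝ) (hCφ1 : 0 < Cφ1) (ha : a < α + 1 / 2)
    (hφlow : ∀ ω : ℝ, Cφ1 * (ω ^ 2 + 1) ^ (-(a / 2)) ≤ ‖ft φ ω‖) :
    ∀ s B : ℝ, 0 ≤ s → 0 < B →
      ∃ D0 : ℝ, 0 < D0 ∧ ∃ M0 : ℝ, ∀ m : ℝ, M0 ≤ m → ∀ n : ℕ, 0 < n →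
        (n : ℝ) ^ (ν - 1) ≤ 1 / 2 → ∀ τ : ℝ, 0 < τ → τ * m ^ s * √m ≤ 1 →
        n * ((n : ℝ) ^ (ν - 1) * τ) ^ 2 * (m * (m ^ (-α)) ^ 2) ≤ 1 →
        ∀ T : (Fin n → ℝ) → ℂ, Measurable T →
          ∃ f₀ : ℝ → ℝ, (∀ x, 0 ≤ f₀ x) ∧ Integrable f₀ ∧ (∫ x, f₀ x) = 1 ∧
            (∫ ω : ℝ, ‖ft f₀ ω‖ ^ 2 * (ω ^ 2 + 1) ^ s) ≤ B ^ 2 ∧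
            Integrable (fun ω : ℝ => ‖ft f₀ ω‖ * ‖ft φ ω‖) ∧
            ENNReal.ofReal ((D0 * (τ * (m * m ^ (-a)))) ^ 2) ≤
              ∫⁻ y : Fin n → ℝ,
                ENNReal.ofReal
                  (‖T y - (1 / (2 * Real.pi) : ℂ) * ∫ ω : ℝ, ft f₀ ω * ft φ (-ω)‖ ^ 2 *
                    ∏ i : Fin n,
                      ((1 - (n : ℝ) ^ (ν - 1)) * g (y i) +
                        (n : ℝ) ^ (ν - 1) * ∫ θ : ℝ, g (y i - θ) * f₀ θ)) := by
  intro s B hs hB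
  have hp := Real.pi_pos
  have hφne : ∀ ω, ft φ ω ≠ 0 := by
    intro ω h
    have := hφlow ω
    rw [h, norm_zero] at this
    have h2 : 0 < Cφ1 * (ω ^ 2 + 1) ^ (-(a / 2)) := by positivity
    linarith
  have hφ : Integrable φ := by
    by_contra h
    apply hφne 0
    rw [ft_zero, integral_undef h]; simp
  have hv : 1 ≤ v₁ := by
    rw [hv₁, Nat.one_le_ceil_iff]; linarith
  have hvv : vs ≤ v₁ := by rw [hv₁]; exact Nat.le_ceil vs
  obtain ⟨b, b1, b2, b3, b4, b5⟩ := exists_bump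
  have hκ0 : 0 < s + 1 := by linarith
  obtain ⟨A, hA, hcon⟩ := construct g φ hg_int v₁ hv Cg2 (by exact_mod_cast hg_smooth) hg_derivs ω₀ ρbar hω₀ ρ
    hρ_arg (by exact_mod_cast hρ_smooth) hρbdd Cg3 α hCg3 hα hgup hφne hκ0 b1 b2 b5
  set Q : ℝ := A + 32 * Real.pi * A / B ^ 2 + A * (2 ^ (v₁ + 1) / Cg1) with hQ
  have x2 : 0 ≤ 32 * Real.pi * A / B ^ 2 := by positivity
  have x3 : 0 ≤ A * (2 ^ (v₁ + 1) / Cg1) := by positivity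
  have hQ1 : 1 ≤ Q := by rw [hQ]; linarith
  have hQ0 : 0 < Q := by linarith
  set c : ℝ := 1 / Q with hc
  have hc0 : 0 < c := by positivity
  have hcQ : c * Q = 1 := by rw [hc]; field_simp
  have hc1 : c ≤ 1 := by rw [hc, div_le_one hQ0]; exact hQ1
  have hcsq : c ^ 2 ≤ c := by nlinarith
  have y1 : c * A ≤ 1 := by
    rw [← hcQ]; gcongr; rw [hQ]; linarith
  have y2 : c * (32 * Real.pi * A / B ^ 2) ≤ 1 := by
    rw [← hcQ]; gcongr; rw [hQ]; linarith
  have y3 : c * (A * (2 ^ (v₁ + 1) / Cg1)) ≤ 1 := by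
    rw [← hcQ]; gcongr; rw [hQ]; linarith
  set G0 : ℝ := Real.exp (-(s + 1) * 4) * (Cφ1 * 5 ^ (-(|a| / 2))) / 2 with hG0
  have hG0p : 0 < G0 := by positivity
  refine ⟨c * G0 / (8 * Real.pi), by positivity, max 1 (ω₀ + 1), ?_⟩
  intro m hmM n hn hμ τ hτ hτ1 hτ2 T hT
  have hm : 1 ≤ m := (le_max_left _ _).trans hmM
  have hmω : ω₀ < m := by linarith [(le_max_right 1 (ω₀ + 1)).trans hmM]
  have hm0 : 0 < m := by linarith
  obtain ⟨k, k1, k2, k3, k4, k5, k6, k7, k8⟩ := hcon m hm hmω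
  have hsm : 0 ≤ √m := Real.sqrt_nonneg m
  have hms : 1 ≤ m ^ s := Real.one_le_rpow hm hs
  have hn0 : (0 : ℝ) < n := by exact_mod_cast hn
  have hμ0 : 0 ≤ (n : ℝ) ^ (ν - 1) := by positivity
  have hlam : 0 < 16 * Real.pi / B ^ 4 := by positivity
  refine two_point g φ hg_nonneg hg_int hg_one hg_bdd hφ hCg1 (low_poly hCg1 hglow hvv)
    (lam := s / 2 + 8 * Real.pi / B ^ 4) (κ := s + 1) (δ := c * τ) (A := A * m) (m := m) hs ?_ (by linarith) hκ0
    hm (by positivity) k1 k2 k3 ?_ k5 ?_ k6 hn hμ0 hμ ?_ k8 (by positivity) ?_ T hT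
  · have : 0 < 8 * Real.pi / B ^ 4 := by positivity
    linarith
  · have t1 : τ * √m ≤ 1 := by
      refine le_trans ?_ hτ1
      gcongr
      exact le_mul_of_one_le_right hτ.le hms
    calc c * τ * ∫ x, |k x| ≤ c * τ * (A * √m) := by gcongr
      _ = (c * A) * (τ * √m) := by ring
      _ ≤ 1 * 1 := by gcongr
      _ = 1 := by norm_num
  · have e1 : Real.pi / (2 * (s / 2 + 8 * Real.pi / B ^ 4) - s) = (B ^ 2 / 4) ^ 2 := by
      have : 2 * (s / 2 + 8 * Real.pi / B ^ 4) - s = 16 * Real.pi / B ^ 4 := by ring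
      rw [this]; field_simp; norm_num
    rw [e1, Real.sqrt_sq (by positivity)]
    have e2 : m ^ (2 * s) = (m ^ s) ^ 2 := by
      rw [mul_comm, Real.rpow_mul hm0.le]; norm_num
    have e3 : 4 * Real.pi * ((c * τ) ^ 2 * m ^ (2 * s)) * (4 * (A * m)) =
        16 * Real.pi * A * c ^ 2 * (τ * m ^ s * √m) ^ 2 := by
      have : m = √m ^ 2 := (Real.sq_sqrt hm0.le).symm
      rw [e2]
      calc _ = 16 * Real.pi * A * c ^ 2 * (τ * m ^ s) ^ 2 * m := by ring
        _ = 16 * Real.pi * A * c ^ 2 * (τ * m ^ s) ^ 2 * √m ^ 2 := by rw [← this]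
        _ = _ := by ring
    rw [e3]
    have e4 : (τ * m ^ s * √m) ^ 2 ≤ 1 := pow_le_one₀ (by positivity) hτ1
    have e5 : 16 * Real.pi * A * c ^ 2 * (τ * m ^ s * √m) ^ 2 ≤ 16 * Real.pi * A * c * 1 := by gcongr
    have e6 : 16 * Real.pi * A * c * 1 = c * (32 * Real.pi * A / B ^ 2) * (B ^ 2 / 2) := by field_simp; norm_num
    have e7 : c * (32 * Real.pi * A / B ^ 2) * (B ^ 2 / 2) ≤ 1 * (B ^ 2 / 2) := by gcongr
    linarith
  · rw [le_div_iff₀ hn0]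
    set μ := (n : ℝ) ^ (ν - 1)
    calc _ ≤ (μ * (c * τ)) ^ 2 * (2 ^ (v₁ + 1) / Cg1) * (A * (m * (m ^ (-α)) ^ 2)) * n := by gcongr
      _ = (c ^ 2 * (A * (2 ^ (v₁ + 1) / Cg1))) * (n * (μ * τ) ^ 2 * (m * (m ^ (-α)) ^ 2)) := by ring
      _ ≤ (c * (A * (2 ^ (v₁ + 1) / Cg1))) * 1 := by gcongr
      _ ≤ 1 := by linarith
  · intro hFi
    have := gap_lower b3 b4 hCφ1 hm hκ0 hφlow hFi
    calc _ = c * τ / (2 * Real.pi) * (G0 * (m * m ^ (-a))) := by field_simp; norm_num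
      _ ≤ _ := by gcongr

lemma scale {n : ℝ} (hn : 1 ≤ n) (e t s ν α a D0 X : ℝ)
    (h1 : t + e * s + e / 2 ≤ 0) (h2 : 1 + 2 * (ν - 1 + t) + e - 2 * (e * α) ≤ 0)
    (h3 : 2 * (t + e - e * a) = X) :
    n ^ t * (n ^ e) ^ s * √(n ^ e) ≤ 1 ∧
    n * (n ^ (ν - 1) * n ^ t) ^ 2 * (n ^ e * ((n ^ e) ^ (-α)) ^ 2) ≤ 1 ∧
    (D0 * (n ^ t * (n ^ e * (n ^ e) ^ (-a)))) ^ 2 = D0 ^ 2 * n ^ X := by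
  have hn0 : 0 < n := by linarith
  have hsq : ∀ x : ℝ, (n ^ x) ^ 2 = n ^ (2 * x) := by
    intro x
    rw [← Real.rpow_natCast, ← Real.rpow_mul hn0.le]; congr 1; push_cast; ring
  refine ⟨?_, ?_, ?_⟩
  · rw [Real.sqrt_eq_rpow, ← Real.rpow_mul hn0.le, ← Real.rpow_mul hn0.le, ← Real.rpow_add hn0,
      ← Real.rpow_add hn0]
    exact Real.rpow_le_one_of_one_le_of_nonpos hn (by linarith)
  · rw [← Real.rpow_mul hn0.le, ← Real.rpow_add hn0, hsq, hsq, ← Real.rpow_add hn0]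
    nth_rewrite 1 [← Real.rpow_one n]
    rw [← Real.rpow_add hn0, ← Real.rpow_add hn0]
    exact Real.rpow_le_one_of_one_le_of_nonpos hn (by linarith)
  · rw [← Real.rpow_mul hn0.le, ← Real.rpow_add hn0, ← Real.rpow_add hn0, mul_pow, hsq]
    congr 2; linarith

theorem stmt_15 (g φ : ℝ → ℝ) (ν : ℝ) (hν : 1 / 2 < ν) (hν1 : ν < 1)
    (hg_nonneg : ∀ x, 0 ≤ g x) (hg_int : Integrable g) (hg_one : (∫ x, g x) = 1)
    (hg_bdd : BddAbove (Set.range g))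
    (Cg1 vs : ℝ) (hCg1 : 0 < Cg1) (hvs : 1 ≤ vs)
    (hglow : ∀ θ : ℝ, Cg1 * (θ ^ 2 + 1) ^ (-vs) ≤ g θ)
    (v₁ : ℕ) (hv₁ : v₁ = ⌈vs⌉₊)
    (Cg2 : ℝ)
    (hg_smooth : ContDiff ℝ ((v₁ : ℕ) : ℕ∞) (ft g))
    (hg_derivs : ∀ l : ℕ, 1 ≤ l → l ≤ v₁ →
      ∀ ω : ℝ, ‖iteratedDeriv l (ft g) ω‖ ≤ Cg2 * ‖ft g ω‖)
    (ω₀ ρbar : ℝ) (hω₀ : 0 < ω₀)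
    (ρ : ℝ → ℝ)
    (hρ_arg : ∀ ω : ℝ, ω₀ ≤ |ω| → ρ ω = (ft φ ω).arg)
    (hρ_smooth : ContDiffOn ℝ ((v₁ : ℕ) : ℕ∞) ρ {ω : ℝ | ω₀ ≤ |ω|})
    (hρbdd : ∀ j : ℕ, j ≤ v₁ → ∀ ω : ℝ, ω₀ ≤ |ω| →
      |iteratedDerivWithin j ρ {ω' : ℝ | ω₀ ≤ |ω'|} ω| ≤ ρbar)
    (Cg3 α : ℝ) (hCg3 : 0 < Cg3) (hα : 0 ≤ α)
    (hgup : ∀ ω : ℝ, ‖ft g ω‖ ≤ Cg3 * (ω ^ 2 + 1) ^ (-(α / 2)))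
    (Cφ1 a : ℝ) (hCφ1 : 0 < Cφ1) (ha : a < α + 1 / 2)
    (hφlow : ∀ ω : ℝ, Cφ1 * (ω ^ 2 + 1) ^ (-(a / 2)) ≤ ‖ft φ ω‖) :
    ∀ s B : ℝ, 0 ≤ s → 0 < B →
      ∃ C : ℝ, 0 < C ∧ ∃ N : ℕ, ∀ n : ℕ, N ≤ n →
        ∀ T : (Fin n → ℝ) → ℂ, Measurable T →
          ∃ f₀ : ℝ → ℝ, (∀ x, 0 ≤ f₀ x) ∧ Integrable f₀ ∧ (∫ x, f₀ x) = 1 ∧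
            (∫ ω : ℝ, ‖ft f₀ ω‖ ^ 2 * (ω ^ 2 + 1) ^ s) ≤ B ^ 2 ∧
            Integrable (fun ω : ℝ => ‖ft f₀ ω‖ * ‖ft φ ω‖) ∧
            ENNReal.ofReal
                (C * (n : ℝ) ^
                  (-((2 * ν - 1) * (2 * s + 2 * a - 1) / (2 * s + 2 * α)))) ≤
              ∫⁻ y : Fin n → ℝ,
                ENNReal.ofReal
                  (‖T y - (1 / (2 * Real.pi) : ℂ) * ∫ ω : ℝ, ft f₀ ω * ft φ (-ω)‖ ^ 2 *
                    ∏ i : Fin n,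
                      ((1 - (n : ℝ) ^ (ν - 1)) * g (y i) +
                        (n : ℝ) ^ (ν - 1) * ∫ θ : ℝ, g (y i - θ) * f₀ θ)) := by
  intro s B hs hB
  obtain ⟨D0, hD0, M0, hcore⟩ := core g φ ν hν hν1 hg_nonneg hg_int hg_one hg_bdd Cg1 vs hCg1 hvs hglow v₁ hv₁ Cg2 hg_smooth hg_derivs ω₀ ρbar hω₀ ρ hρ_arg hρ_smooth hρbdd Cg3 α hCg3 hα hgup Cφ1 a hCφ1 ha hφlow s B hs hB
  obtain ⟨e, t, he, h1, h2, h3⟩ : ∃ e t : ℝ, 0 < e ∧ t + e * s + e / 2 ≤ 0 ∧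
      1 + 2 * (ν - 1 + t) + e - 2 * (e * α) ≤ 0 ∧
      2 * (t + e - e * a) = -((2 * ν - 1) * (2 * s + 2 * a - 1) / (2 * s + 2 * α)) := by
    by_cases hsα : 0 < s + α
    · have hd : 0 < 2 * s + 2 * α := by linarith
      refine ⟨(2 * ν - 1) / (2 * s + 2 * α), -((2 * ν - 1) / (2 * s + 2 * α)) * (s + 1 / 2), ?_, ?_, ?_, ?_⟩
      · apply div_pos <;> linarith
      · apply le_of_eq; ring
      · apply le_of_eq
        have : (2 * ν - 1) / (2 * s + 2 * α) * (2 * s + 2 * α) = 2 * ν - 1 := by field_simp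
        linarith
      · rw [mul_div_right_comm]; ring
    · have hs0 : s = 0 := by linarith
      have hα0 : α = 0 := by linarith
      have ha' : 0 < 1 - 2 * a := by linarith
      have : (2 * ν - 1) / (1 - 2 * a) * (1 - 2 * a) = 2 * ν - 1 := by field_simp
      refine ⟨(2 * ν - 1) / (1 - 2 * a), -(ν - 1 / 2) - (2 * ν - 1) / (1 - 2 * a) / 2, ?_, ?_, ?_, ?_⟩
      · apply div_pos <;> linarith
      · rw [hs0]; linarith
      · rw [hα0]; linarith
      · rw [hs0, hα0]; simp; linarith
  have hcast := tendsto_natCast_atTop_atTop (R := ℝ)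
  have l1 := ((tendsto_rpow_atTop he).comp hcast).eventually_ge_atTop M0
  have l2 : ∀ᶠ n : ℕ in Filter.atTop, (n : ℝ) ^ (ν - 1) ≤ 1 / 2 := by
    have := (tendsto_rpow_neg_atTop (y := 1 - ν) (by linarith)).comp hcast
    filter_upwards [this.eventually (gt_mem_nhds (show (0 : ℝ) < 1 / 2 by norm_num))] with n hn
    simp only [Function.comp_apply, neg_sub] at hn
    exact hn.le
  obtain ⟨N, hN⟩ := Filter.eventually_atTop.1 ((l1.and l2).and (Filter.eventually_ge_atTop 1))
  refine ⟨D0 ^ 2, by positivity, N, ?_⟩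
  intro n hn T hT
  obtain ⟨⟨c1, c2⟩, c3⟩ := hN n hn
  have hn1 : (1 : ℝ) ≤ n := by exact_mod_cast c3
  obtain ⟨e1, e2, e3⟩ := scale hn1 e t s ν α a D0 _ h1 h2 h3
  have := hcore ((n : ℝ) ^ e) c1 n c3 c2 ((n : ℝ) ^ t) (by positivity) e1 e2 T hT
  rw [e3] at this
  exact this
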